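/- Let (u_n) and (v_n) be sequences of harmonic functions on the open unit disc 𝔻 ⊂ ℝ² such that for each n: Z(u_n) = Z(v_n) and u_n(x)·v_n(x) > 0 for every x ∈ 𝔻 ∖ Z(u_n). Suppose u_n converges to u uniformly on compact subsets of 𝔻, where u is harmonic and not identically zero, and v_n converges uniformly on compact subsets of 𝔻 to the harmonic function v(x, y) = Im((x + iy)^k) for some positive integer k. Then sup_n sup_{x ∈ B_{1/4} ∖ Z(v_n)} |∇(u_n/v_n)(x)| / (u_n(x)/v_n(x)) < +∞, where B_{1/4} is the disc of radius 1/4 centered at the origin. -/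

import Mathlib

open Metric Set Filter

noncomputable section

abbrev En (n : ℕ) : Type := EuclideanSpace ℝ (Fin n)

/-- The Laplacian of `u` at `x`, computed from the second iterated Fréchet derivative. -/
def laplacianAt {n : ℕ} (u : En n → ℝ) (x : En n) : ℝ :=
  ∑ i : Fin n, iteratedFDeriv ℝ 2 u x ![EuclideanSpace.single i 1, EuclideanSpace.single i 1]

/-- `u` is harmonic on `Ω`: twice continuously differentiable with vanishing Laplacian. -/
def HarmonicOnSet {n : ℕ} (u : En n → ℝ) (Ω : Set (En n)) : Prop :=
  ContDiffOn ℝ 2 u Ω ∧ ∀ x ∈ Ω, laplacianAt u x = 0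

/-- The zero set of `u` within `Ω`. -/
def zeroSet {n : ℕ} (u : En n → ℝ) (Ω : Set (En n)) : Set (En n) :=
  {x ∈ Ω | u x = 0}

/-- The collection of nodal domains of `u` in `Ω`, i.e. the connected components of
`Ω \ Z(u)`. -/
def nodalComponents {n : ℕ} (u : En n → ℝ) (Ω : Set (En n)) : Set (Set (En n)) :=
  {C | ∃ x ∈ Ω \ zeroSet u Ω, C = connectedComponentIn (Ω \ zeroSet u Ω) x}

open scoped Topology ComplexConjugate

/-- The half-disc Poisson kernel divided by the product of the imaginary parts of its arguments. -/
noncomputable def halfDiscKernel (a s : ℂ) : ℝ :=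
  2 * (1 - ‖a‖ ^ 2) / ‖(s - a) * (s - conj a)‖ ^ 2

lemma norm_sub_mul_sub_conj_bounds {a s : ℂ} (ha : ‖a‖ ≤ 3 / 4) (hs : ‖s‖ = 1) :
    1 / 16 ≤ ‖(s - a) * (s - conj a)‖ ∧ ‖(s - a) * (s - conj a)‖ ≤ 4 := by
  have hc : ‖conj a‖ ≤ 3 / 4 := by simpa using ha
  have h1 := norm_sub_norm_le s a
  have h2 := norm_sub_norm_le s (conj a)
  have h3 := norm_sub_le s a
  have h4 := norm_sub_le s (conj a)
  rw [norm_mul]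
  constructor <;> nlinarith [norm_nonneg (s - a), norm_nonneg (s - conj a)]

lemma abs_halfDiscKernel_sub_le {a b s : ℂ} (ha : ‖a‖ ≤ 3 / 4) (hb : ‖b‖ ≤ 3 / 4) (hs : ‖s‖ = 1) :
    |halfDiscKernel a s - halfDiscKernel b s| ≤ 32768 * ‖a - b‖ * halfDiscKernel a s := by
  obtain ⟨hP1, hP2⟩ := norm_sub_mul_sub_conj_bounds ha hs
  obtain ⟨hQ1, hQ2⟩ := norm_sub_mul_sub_conj_bounds hb hs
  have hPQ : |‖(s - a) * (s - conj a)‖ - ‖(s - b) * (s - conj b)‖| ≤ 4 * ‖a - b‖ := by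
    refine (abs_norm_sub_norm_le _ _).trans ?_
    have : (s - a) * (s - conj a) - (s - b) * (s - conj b) =
        -(s * (a - b)) - s * conj (a - b) + (a - b) * conj a + b * conj (a - b) := by
      simp only [map_sub]; ring
    rw [this]
    refine (norm_add_le _ _).trans ?_
    have e1 := norm_add_le (-(s * (a - b)) - s * conj (a - b)) ((a - b) * conj a)
    have e2 := norm_sub_le (-(s * (a - b))) (s * conj (a - b))
    simp only [norm_neg, norm_mul, RCLike.norm_conj, hs] at *
    nlinarith [norm_nonneg (a - b)]
  have hn : |‖a‖ - ‖b‖| ≤ ‖a - b‖ := abs_norm_sub_norm_le a b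
  unfold halfDiscKernel
  set P := ‖(s - a) * (s - conj a)‖
  set Q := ‖(s - b) * (s - conj b)‖
  set x := ‖a‖
  set y := ‖b‖
  set d := ‖a - b‖
  have hx0 : 0 ≤ x := norm_nonneg _
  have hy0 : 0 ≤ y := norm_nonneg _
  have hd0 : 0 ≤ d := norm_nonneg _
  have hP : 0 < P := by linarith
  have hQ : 0 < Q := by linarith
  have hx1 : 7 / 16 ≤ 1 - x ^ 2 := by nlinarith
  have key : |(1 - x ^ 2) * Q ^ 2 - (1 - y ^ 2) * P ^ 2| ≤ 56 * d := by
    have : (1 - x ^ 2) * Q ^ 2 - (1 - y ^ 2) * P ^ 2 =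
      -((x - y) * ((x + y) * P ^ 2)) - (P - Q) * ((P + Q) * (1 - x ^ 2)) := by ring
    rw [this]
    refine (abs_sub _ _).trans ?_
    rw [abs_neg, abs_mul (x - y), abs_mul (P - Q), abs_of_nonneg (show 0 ≤ (x + y) * P ^ 2 by positivity),
      abs_of_nonneg (show 0 ≤ (P + Q) * (1 - x ^ 2) by
        apply mul_nonneg <;> linarith)]
    have h1 : (x + y) * P ^ 2 ≤ 24 := by nlinarith
    have h2 : (P + Q) * (1 - x ^ 2) ≤ 8 := by nlinarith
    have h3 : 0 ≤ (x + y) * P ^ 2 := by positivity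
    have h4 : 0 ≤ (P + Q) * (1 - x ^ 2) := by
        apply mul_nonneg <;> linarith
    calc _ ≤ d * 24 + 4 * d * 8 := by gcongr
      _ = _ := by ring
  have e : 2 * (1 - x ^ 2) / P ^ 2 - 2 * (1 - y ^ 2) / Q ^ 2 =
      2 * ((1 - x ^ 2) * Q ^ 2 - (1 - y ^ 2) * P ^ 2) / (P ^ 2 * Q ^ 2) := by
    field_simp
  rw [e, abs_div, abs_mul, abs_of_pos (show (0 : ℝ) < P ^ 2 * Q ^ 2 by positivity), abs_two]
  rw [div_le_iff₀ (by positivity)]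
  have e2 : 32768 * d * (2 * (1 - x ^ 2) / P ^ 2) * (P ^ 2 * Q ^ 2) =
    65536 * d * ((1 - x ^ 2) * Q ^ 2) := by field_simp; ring
  rw [e2]
  have h5 : 7 / 16 * (1 / 256) ≤ (1 - x ^ 2) * Q ^ 2 := by
    apply mul_le_mul hx1 _ (by norm_num) (by linarith)
    nlinarith
  nlinarith [mul_le_mul_of_nonneg_left h5 hd0]

lemma continuousOn_halfDiscKernel {a : ℂ} (ha : ‖a‖ ≤ 3 / 4) :
    ContinuousOn (halfDiscKernel a) (sphere 0 1) := by
  unfold halfDiscKernel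
  refine ContinuousOn.div (by fun_prop) (by fun_prop) fun s hs => ?_
  have := (norm_sub_mul_sub_conj_bounds ha (by simpa using hs)).1
  positivity

lemma poissonKernel_sub_poissonKernel_conj {a s : ℂ} (ha : ‖a‖ ≤ 3 / 4) (hs : ‖s‖ = 1) :
    poissonKernel 0 a s - poissonKernel 0 (conj a) s = 2 * a.im * (halfDiscKernel a s * s.im) := by
  have hb := (norm_sub_mul_sub_conj_bounds ha hs).1
  have h0 : (s - a) * (s - conj a) ≠ 0 := by
    rw [← norm_pos_iff]; linarith
  have h1 : ‖s - a‖ ≠ 0 := norm_ne_zero_iff.2 (left_ne_zero_of_mul h0)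
  have h2 : ‖s - conj a‖ ≠ 0 := norm_ne_zero_iff.2 (right_ne_zero_of_mul h0)
  simp only [poissonKernel_def, halfDiscKernel, sub_zero, hs, norm_mul, RCLike.norm_conj]
  have e : ‖s - conj a‖ ^ 2 - ‖s - a‖ ^ 2 = 4 * a.im * s.im := by
    simp only [Complex.sq_norm, Complex.normSq_apply, Complex.sub_re, Complex.sub_im,
      Complex.conj_re, Complex.conj_im]
    ring
  field_simp
  linear_combination (1 - ‖a‖ ^ 2) * e

lemma im_div_im_eq_circleAverage {H : ℂ → ℂ} (hH : DifferentiableOn ℂ H (ball 0 (5 / 4)))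
    (hsymm : ∀ z ∈ ball (0 : ℂ) 1, (H (conj z)).im = -(H z).im) {a : ℂ} (ha : ‖a‖ ≤ 3 / 4)
    (ha' : a.im ≠ 0) :
    (H a).im / a.im =
      Real.circleAverage (fun s => halfDiscKernel a s * (s.im * (H s).im)) 0 1 := by
  have hharm : InnerProductSpace.HarmonicOnNhd (fun z => (H z).im) (closedBall 0 1) := by
    intro z hz
    refine AnalyticAt.harmonicAt_im (hH.analyticAt (isOpen_ball.mem_nhds ?_))
    exact closedBall_subset_ball (by norm_num) hz
  have hcont : ContinuousOn (fun z => (H z).im) (sphere 0 1) :=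
    (hharm.continuousOn).mono sphere_subset_closedBall
  have hmem : a ∈ ball (0 : ℂ) 1 := by
    simp only [mem_ball_zero_iff]; linarith
  have hmem' : conj a ∈ ball (0 : ℂ) 1 := by
    simp only [mem_ball_zero_iff, RCLike.norm_conj]; linarith
  have h1 := hharm.circleAverage_poissonKernel_smul hmem
  have h2 := hharm.circleAverage_poissonKernel_smul hmem'
  rw [hsymm a hmem] at h2
  have hint : ∀ w ∈ ball (0 : ℂ) 1,
      CircleIntegrable (poissonKernel 0 w • fun z => (H z).im) 0 1 := by
    intro w hw
    apply ContinuousOn.circleIntegrable (by norm_num)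
    refine ContinuousOn.mul ?_ hcont
    have : poissonKernel 0 w = fun z => (‖z - 0‖ ^ 2 - ‖w - 0‖ ^ 2) / ‖(z - 0) - (w - 0)‖ ^ 2 := by
      ext z; exact poissonKernel_def _ _ _
    rw [this]
    refine ContinuousOn.div (by fun_prop) (by fun_prop) fun s hs => ?_
    have : s ≠ w := by
      rintro rfl
      simp at hs hw
      linarith
    simpa [sub_eq_zero] using this
  have h3 := Real.circleAverage_sub (hint a hmem) (hint _ hmem')
  rw [h1, h2] at h3
  have h4 : Real.circleAverage ((poissonKernel 0 a • fun z => (H z).im) -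
      poissonKernel 0 (conj a) • fun z => (H z).im) 0 1 =
      Real.circleAverage (fun s => (2 * a.im) • (halfDiscKernel a s * (s.im * (H s).im))) 0 1 := by
    apply Real.circleAverage_congr_sphere
    intro s hs
    have := poissonKernel_sub_poissonKernel_conj ha (s := s) (by simpa using hs)
    simp only [Pi.sub_apply, smul_eq_mul, Pi.mul_apply]
    linear_combination (H s).im * this
  rw [h4, Real.circleAverage_fun_smul, smul_eq_mul] at h3
  rw [div_eq_iff ha']
  linarith

/-- Harnack's inequality for the quotient `Im H / Im` of a typically real function `H`. -/
lemma abs_im_div_im_sub_le {H : ℂ → ℂ} (hH : DifferentiableOn ℂ H (ball 0 (5 / 4)))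
    (hsymm : ∀ z ∈ ball (0 : ℂ) 1, (H (conj z)).im = -(H z).im)
    (hpos : ∀ s : ℂ, ‖s‖ = 1 → 0 ≤ s.im * (H s).im) {a b : ℂ}
    (ha : ‖a‖ ≤ 3 / 4) (hb : ‖b‖ ≤ 3 / 4) (ha' : a.im ≠ 0) (hb' : b.im ≠ 0) :
    |(H a).im / a.im - (H b).im / b.im| ≤ 32768 * ‖a - b‖ * ((H a).im / a.im) := by
  have hcont : ContinuousOn (fun z => (H z).im) (sphere 0 1) := by
    refine Complex.continuous_im.comp_continuousOn (hH.continuousOn.mono ?_)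
    exact sphere_subset_closedBall.trans (closedBall_subset_ball (by norm_num))
  have hint : ∀ w : ℂ, ‖w‖ ≤ 3 / 4 →
      CircleIntegrable (fun s => halfDiscKernel w s * (s.im * (H s).im)) 0 1 := by
    intro w hw
    apply ContinuousOn.circleIntegrable (by norm_num)
    exact (continuousOn_halfDiscKernel hw).mul (Complex.continuous_im.continuousOn.mul hcont)
  rw [im_div_im_eq_circleAverage hH hsymm ha ha', im_div_im_eq_circleAverage hH hsymm hb hb',
    ← Real.circleAverage_fun_sub (hint a ha) (hint b hb)]
  refine Real.abs_circleAverage_le_circleAverage_abs.trans ?_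
  rw [← smul_eq_mul, ← Real.circleAverage_fun_smul]
  refine Real.circleAverage_mono ((hint a ha).sub (hint b hb)).abs ((hint a ha).const_smul) ?_
  intro s hs
  have hs1 : ‖s‖ = 1 := by simpa using hs
  have := abs_halfDiscKernel_sub_le ha hb hs1
  simp only [Pi.abs_apply, smul_eq_mul, ← sub_mul, abs_mul]
  have h0 := hpos s hs1
  rw [← abs_mul, abs_of_nonneg h0, ← mul_assoc (32768 * ‖a - b‖)]
  exact mul_le_mul_of_nonneg_right this h0

/-- The open vertical strip of half-width `r` around the imaginary axis. -/
def vertStrip (r : ℝ) : Set ℂ := {z | |z.re| < r}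

lemma isOpen_vertStrip (r : ℝ) : IsOpen (vertStrip r) :=
  isOpen_lt (continuous_abs.comp Complex.continuous_re) continuous_const

lemma convex_vertStrip (r : ℝ) : Convex ℝ (vertStrip r) := by
  have : vertStrip r = Complex.reLm ⁻¹' (Ioo (-r) r) := by
    ext z; simp [vertStrip, abs_lt]
  rw [this]
  exact (convex_Ioo _ _).is_linear_preimage Complex.reLm.isLinear

lemma vertStrip_subset {r r' : ℝ} (h : r ≤ r') : vertStrip r ⊆ vertStrip r' :=
  fun _ hz => lt_of_lt_of_le hz h

lemma mem_vertStrip_of_norm_sub_le {r d : ℝ} {z w : ℂ} (hz : |z.re| < r - d) (h : ‖w - z‖ ≤ d) :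
    w ∈ vertStrip r := by
  have h1 := (Complex.abs_re_le_norm (w - z)).trans h
  have h2 : w.re = z.re + (w - z).re := by simp
  have h3 := abs_add_le z.re (w - z).re
  rw [← h2] at h3
  exact lt_of_le_of_lt h3 (by linarith)

/-- In logarithmic coordinates, a holomorphic perturbation of `z ^ k` is a perturbation of
multiplication by `k`. -/
lemma exists_log_coordinate {k : ℕ} (hk : 0 < k) {g : ℂ → ℂ}
    (hg : DifferentiableOn ℂ g (ball 0 (7 / 4)))
    (hgk : ∀ z ∈ ball (0 : ℂ) (7 / 4), ‖g z - z ^ k‖ ≤ Real.exp (-(k / 2 : ℝ)) / (100 * k)) :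
    ∃ L : ℂ → ℂ, DifferentiableOn ℂ L (vertStrip (1 / 2)) ∧
      (∀ t ∈ vertStrip (1 / 2), ‖L t - t‖ ≤ 1 / (64 * k)) ∧
      ∀ t ∈ vertStrip (1 / 2), g (Complex.exp t) = Complex.exp (k * L t) := by
  have hk1 : (1 : ℝ) ≤ k := by exact_mod_cast hk
  have hkc : (k : ℂ) ≠ 0 := by exact_mod_cast hk.ne'
  set q : ℂ → ℂ := fun t => (g (Complex.exp t) - Complex.exp t ^ k) * Complex.exp (-(k * t)) with hq
  have hball : ∀ t ∈ vertStrip (1 / 2), Complex.exp t ∈ ball (0 : ℂ) (7 / 4) := by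
    intro t ht
    rw [mem_ball_zero_iff, Complex.norm_exp]
    have h1 : t.re < 1 / 2 := (abs_lt.1 ht).2
    have h2 : Real.exp (1 / 2) < 7 / 4 := by
      have h3 : Real.exp (1 / 2) ^ 2 = Real.exp 1 := by
        rw [← Real.exp_nat_mul]; norm_num
      have h4 := Real.exp_one_lt_d9
      nlinarith [Real.exp_pos (1 / 2)]
    exact (Real.exp_lt_exp.2 h1).trans h2
  have hqn : ∀ t ∈ vertStrip (1 / 2), ‖q t‖ ≤ 1 / (100 * k) := by
    intro t ht
    rw [hq]
    simp only [norm_mul, Complex.norm_exp]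
    have h1 := hgk _ (hball t ht)
    have h2 : (-(k * t) : ℂ).re ≤ k / 2 := by
      have := (abs_lt.1 (show |t.re| < 1 / 2 from ht)).1
      simp
      nlinarith
    calc _ ≤ Real.exp (-(k / 2 : ℝ)) / (100 * k) * Real.exp (k / 2) := by gcongr
      _ = 1 / (100 * k) := by
        rw [div_mul_eq_mul_div, ← Real.exp_add]; simp
  have hqs : ∀ t ∈ vertStrip (1 / 2), ‖q t‖ ≤ 1 / 100 := fun t ht =>
    (hqn t ht).trans (by gcongr; linarith)
  have hslit : ∀ t ∈ vertStrip (1 / 2), 1 + q t ∈ Complex.slitPlane := fun t ht =>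
    Complex.mem_slitPlane_of_norm_lt_one (lt_of_le_of_lt (hqs t ht) (by norm_num))
  refine ⟨fun t => t + Complex.log (1 + q t) / k, ?_, ?_, ?_⟩
  · have hqd : DifferentiableOn ℂ q (vertStrip (1 / 2)) := by
      refine DifferentiableOn.mul (DifferentiableOn.sub ?_ (by fun_prop)) (by fun_prop)
      exact hg.comp Complex.differentiable_exp.differentiableOn hball
    exact differentiableOn_id.add ((((differentiableOn_const 1).add hqd).clog hslit).div_const _)
  · intro t ht
    have h1 := Complex.norm_log_one_add_half_le_self ((hqs t ht).trans (by norm_num))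
    simp only [add_sub_cancel_left, norm_div, Complex.norm_natCast]
    have h2 := hqn t ht
    calc ‖Complex.log (1 + q t)‖ / k ≤ (3 / 2 * (1 / (100 * k))) / 1 := by
          gcongr
          exact h1.trans (by gcongr)
      _ ≤ 1 / (64 * k) := by
          have h3 : (0 : ℝ) ≤ (k : ℝ)⁻¹ := by positivity
          have h4 : 3 / 2 * (1 / (100 * (k : ℝ))) / 1 = 3 / 200 * (k : ℝ)⁻¹ := by
            rw [one_div, mul_inv]; ring
          have h5 : 1 / (64 * (k : ℝ)) = 1 / 64 * (k : ℝ)⁻¹ := by rw [one_div, mul_inv]; ring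
          rw [h4, h5]
          linarith
  · intro t ht
    have h0 : 1 + q t ≠ 0 := Complex.slitPlane_ne_zero (hslit t ht)
    have : (k : ℂ) * (t + Complex.log (1 + q t) / k) = k * t + Complex.log (1 + q t) := by
      field_simp
    simp only [this]
    rw [Complex.exp_add, Complex.exp_log h0]
    simp only [hq]
    have e : Complex.exp (k * t) * Complex.exp (-(k * t)) = 1 := by
      rw [← Complex.exp_add]; simp
    rw [← Complex.exp_nat_mul]
    linear_combination (-(g (Complex.exp t) - Complex.exp (k * t))) * e

lemma norm_deriv_sub_one_le {L : ℂ → ℂ} (hL : DifferentiableOn ℂ L (vertStrip (1 / 2)))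
    (hL' : ∀ t ∈ vertStrip (1 / 2), ‖L t - t‖ ≤ 1 / 64)
    {t : ℂ} (ht : t ∈ vertStrip (1 / 4)) : ‖deriv L t - 1‖ ≤ 1 / 8 := by
  have hd : DifferentiableOn ℂ (fun z => L z - z) (vertStrip (1 / 2)) := hL.sub differentiableOn_id
  have hsub : closedBall t (1 / 8) ⊆ vertStrip (1 / 2) := by
    intro z hz
    refine mem_vertStrip_of_norm_sub_le (d := 1 / 8) (lt_of_lt_of_le ht (by norm_num)) ?_
    simpa [dist_eq_norm] using hz
  have h1 := Complex.norm_deriv_le_of_forall_mem_sphere_norm_le (f := fun z => L z - z)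
    (R := 1 / 8) (C := 1 / 64) (c := t) (by norm_num)
    ((hd.mono hsub).diffContOnCl_ball subset_rfl)
    fun z hz => hL' z (hsub (sphere_subset_closedBall hz))
  have htL : DifferentiableAt ℂ L t := hL.differentiableAt
    ((isOpen_vertStrip _).mem_nhds (vertStrip_subset (by norm_num) ht))
  rw [deriv_fun_sub htL differentiableAt_fun_id, deriv_id''] at h1
  linarith

lemma norm_sub_sub_sub_le {L : ℂ → ℂ} (hL : DifferentiableOn ℂ L (vertStrip (1 / 2)))
    (hL' : ∀ t ∈ vertStrip (1 / 2), ‖L t - t‖ ≤ 1 / 64) {t t' : ℂ}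
    (ht : t ∈ vertStrip (1 / 4)) (ht' : t' ∈ vertStrip (1 / 4)) :
    ‖(L t - t) - (L t' - t')‖ ≤ 1 / 8 * ‖t - t'‖ := by
  have hd : ∀ x ∈ vertStrip (1 / 4), DifferentiableAt ℂ L x := fun x hx => hL.differentiableAt
    ((isOpen_vertStrip _).mem_nhds (vertStrip_subset (by norm_num) hx))
  refine (convex_vertStrip (1 / 4)).norm_image_sub_le_of_norm_deriv_le
    (f := fun z => L z - z) (fun x hx => (hd x hx).sub differentiableAt_id) (fun x hx => ?_) ht' ht
  rw [deriv_fun_sub (hd x hx) differentiableAt_fun_id, deriv_id'']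
  exact norm_deriv_sub_one_le hL hL' hx

lemma norm_sub_le_two_mul {L : ℂ → ℂ} (hL : DifferentiableOn ℂ L (vertStrip (1 / 2)))
    (hL' : ∀ t ∈ vertStrip (1 / 2), ‖L t - t‖ ≤ 1 / 64) {t t' : ℂ}
    (ht : t ∈ vertStrip (1 / 4)) (ht' : t' ∈ vertStrip (1 / 4)) :
    ‖t - t'‖ ≤ 2 * ‖L t - L t'‖ := by
  have h1 := norm_sub_sub_sub_le hL hL' ht ht'
  have h2 := norm_sub_le (L t - L t') ((L t - t) - (L t' - t'))
  have h3 : (L t - L t') - ((L t - t) - (L t' - t')) = t - t' := by ring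
  rw [h3] at h2
  linarith [norm_nonneg (t - t')]

lemma exists_eq_of_mem_vertStrip {L : ℂ → ℂ} (hL : DifferentiableOn ℂ L (vertStrip (1 / 2)))
    (hL' : ∀ t ∈ vertStrip (1 / 2), ‖L t - t‖ ≤ 1 / 64) {s : ℂ} (hs : s ∈ vertStrip (1 / 8)) :
    ∃ t ∈ vertStrip (1 / 4), L t = s := by
  have hsub : closedBall s (1 / 64) ⊆ vertStrip (1 / 4) := by
    intro z hz
    refine mem_vertStrip_of_norm_sub_le (d := 1 / 8) (lt_of_lt_of_le hs (by norm_num)) ?_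
    have : ‖z - s‖ ≤ 1 / 64 := by simpa [dist_eq_norm] using hz
    linarith
  have hmaps : MapsTo (fun t => s - (L t - t)) (closedBall s (1 / 64)) (closedBall s (1 / 64)) := by
    intro z hz
    have := hL' z (vertStrip_subset (by norm_num) (hsub hz))
    simpa [dist_eq_norm] using this
  have hcontr : ContractingWith (1 / 8) (hmaps.restrict _ _ _) := by
    refine ⟨by rw [div_lt_one (by norm_num)]; norm_num, LipschitzWith.of_dist_le_mul fun x y => ?_⟩
    have := norm_sub_sub_sub_le hL hL' (hsub y.2) (hsub x.2)
    simp only [Subtype.dist_eq, MapsTo.val_restrict_apply, dist_eq_norm]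
    have e : (s - (L x - x)) - (s - (L y - y)) = (L y - y) - (L x - x) := by ring
    rw [e, norm_sub_rev (x : ℂ)]
    simpa using this
  obtain ⟨t, ht, hfix, -⟩ := hcontr.exists_fixedPoint' isClosed_closedBall.isComplete hmaps
    (mem_closedBall_self (by norm_num)) (edist_ne_top s _)
  refine ⟨t, hsub ht, ?_⟩
  have : s - (L t - t) = t := hfix
  linear_combination -this

lemma exists_inverse_on_vertStrip {L : ℂ → ℂ} (hL : DifferentiableOn ℂ L (vertStrip (1 / 2)))
    (hL' : ∀ t ∈ vertStrip (1 / 2), ‖L t - t‖ ≤ 1 / 64) :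
    ∃ T : ℂ → ℂ, DifferentiableOn ℂ T (vertStrip (1 / 8)) ∧
      MapsTo T (vertStrip (1 / 8)) (vertStrip (1 / 4)) ∧
      (∀ s ∈ vertStrip (1 / 8), L (T s) = s) ∧
      ∀ t ∈ vertStrip (1 / 4), L t ∈ vertStrip (1 / 8) → T (L t) = t := by
  choose! T hT hLT using fun s hs => exists_eq_of_mem_vertStrip hL hL' (s := s) hs
  refine ⟨T, fun s hs => ?_, hT, hLT, fun t ht hLt => ?_⟩
  · have hnhds : vertStrip (1 / 8) ∈ 𝓝 s := (isOpen_vertStrip _).mem_nhds hs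
    have hcont : ContinuousAt T s := by
      have hlip : LipschitzOnWith 2 T (vertStrip (1 / 8)) := by
        refine LipschitzOnWith.of_dist_le_mul fun x hx y hy => ?_
        have := norm_sub_le_two_mul hL hL' (hT x hx) (hT y hy)
        rw [hLT x hx, hLT y hy] at this
        simpa [dist_eq_norm] using this
      exact hlip.continuousOn.continuousAt hnhds
    have hd : HasDerivAt L (deriv L (T s)) (T s) := (hL.differentiableAt
      ((isOpen_vertStrip _).mem_nhds (vertStrip_subset (by norm_num) (hT s hs)))).hasDerivAt
    refine (HasDerivAt.of_local_left_inverse hcont hd ?_ ?_).differentiableAt.differentiableWithinAt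
    · intro h0
      have := norm_deriv_sub_one_le hL hL' (hT s hs)
      rw [h0] at this
      norm_num at this
    · filter_upwards [hnhds] with y hy using hLT y hy
  · have := norm_sub_le_two_mul hL hL' (hT _ hLt) ht
    rw [hLT _ hLt, sub_self, norm_zero, mul_zero] at this
    exact sub_eq_zero.1 (norm_le_zero_iff.1 this)

lemma eqOn_of_eqOn_horizontal_line {S : Set ℂ} (hS : IsOpen S) (hc : IsPreconnected S) {f g : ℂ → ℂ}
    (hf : DifferentiableOn ℂ f S) (hg : DifferentiableOn ℂ g S) {p : ℂ} (hp : p ∈ S)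
    (h : ∀ z ∈ S, z.im = p.im → f z = g z) : EqOn f g S := by
  refine (hf.analyticOnNhd hS).eqOn_of_preconnected_of_frequently_eq (hg.analyticOnNhd hS) hc hp ?_
  have ht : Tendsto (fun x : ℝ => p + x) (𝓝[≠] 0) (𝓝[≠] p) := by
    refine tendsto_nhdsWithin_iff.2 ⟨?_, ?_⟩
    · have : Continuous fun x : ℝ => p + x := by fun_prop
      simpa using (this.tendsto 0).mono_left nhdsWithin_le_nhds
    · filter_upwards [self_mem_nhdsWithin] with x hx
      simpa using hx
  have hev : ∀ᶠ x : ℝ in 𝓝[≠] 0, f (p + x) = g (p + x) := by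
    filter_upwards [ht.eventually (nhdsWithin_le_nhds (hS.mem_nhds hp))] with x hx
    exact h _ hx (by simp)
  exact ht.frequently hev.frequently

/-- A holomorphic function on a vertical strip which is real on two horizontal lines at distance
`c` has period `2 * c * I`. -/
lemma eq_add_int_mul_of_im_eq_zero {r c : ℝ} (hr : 0 < r) {q : ℂ → ℂ}
    (hq : DifferentiableOn ℂ q (vertStrip r))
    (h0 : ∀ s ∈ vertStrip r, s.im = 0 → (q s).im = 0)
    (h1 : ∀ s ∈ vertStrip r, s.im = c → (q s).im = 0) {s : ℂ} (hs : s ∈ vertStrip r) (n : ℤ) :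
    q (s + n * (2 * c * Complex.I)) = q s := by
  have hopen := isOpen_vertStrip r
  have hconn := (convex_vertStrip r).isPreconnected
  have hshift : ∀ (s : ℂ) (d : ℝ), s ∈ vertStrip r → s + d * Complex.I ∈ vertStrip r := by
    intro s d hs; simpa [vertStrip] using hs
  have hconj : ∀ s, s ∈ vertStrip r → conj s ∈ vertStrip r := by
    intro s hs; simpa [vertStrip] using hs
  have hrefl : ∀ f : ℂ → ℂ, DifferentiableOn ℂ f (vertStrip r) →
      DifferentiableOn ℂ (fun s => conj (f (conj s))) (vertStrip r) := by
    intro f hf s hs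
    have := (hf.differentiableAt (hopen.mem_nhds (hconj s hs)))
    exact ((differentiableAt_conj_conj_iff (f := f)).2 this).differentiableWithinAt
  have hA : EqOn q (fun s => conj (q (conj s))) (vertStrip r) := by
    refine eqOn_of_eqOn_horizontal_line hopen hconn hq (hrefl q hq) (p := 0)
      (by simpa [vertStrip] using hr) fun z hz hz0 => ?_
    have hzc : conj z = z := Complex.conj_eq_iff_im.2 (by simpa using hz0)
    simp only [hzc]
    exact (Complex.conj_eq_iff_im.2 (h0 z hz (by simpa using hz0))).symm
  have hB : EqOn q (fun s => conj (q (conj s + (2 * c : ℝ) * Complex.I))) (vertStrip r) := by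
    have hd : DifferentiableOn ℂ (fun s => q (s + (2 * c : ℝ) * Complex.I)) (vertStrip r) :=
      hq.comp (by fun_prop) fun s hs => hshift s _ hs
    refine eqOn_of_eqOn_horizontal_line hopen hconn hq (hrefl _ hd) (p := c * Complex.I)
      (by simpa [vertStrip] using hr) fun z hz hz0 => ?_
    have hz1 : z.im = c := by simpa using hz0
    have hzc : conj z + (2 * c : ℝ) * Complex.I = z := by
      apply Complex.ext
      · simp
      · simp [hz1]; ring
    simp only [hzc]
    exact (Complex.conj_eq_iff_im.2 (h1 z hz hz1)).symm
  have hper : ∀ s ∈ vertStrip r, q (s + (2 * c : ℝ) * Complex.I) = q s := by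
    intro s hs
    have e1 := hA (hconj s hs)
    have e2 := hB (hconj s hs)
    rw [e1] at e2
    simpa using (congrArg conj e2).symm
  have hmem : ∀ m : ℤ, s + m * ((2 * c : ℝ) * Complex.I) ∈ vertStrip r := by
    intro m
    have := hshift s (m * (2 * c)) hs
    push_cast at this ⊢
    simpa [mul_assoc] using this
  have key : ∀ m : ℤ, q (s + m * ((2 * c : ℝ) * Complex.I)) = q s := by
    intro m
    induction m using Int.induction_on with
    | zero => simp
    | succ i ih =>
      rw [← ih, ← hper _ (hmem i)]
      congr 1; push_cast; ring
    | pred i ih =>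
      rw [← ih, ← hper _ (hmem (-i - 1))]
      congr 1; push_cast; ring
  have := key n
  push_cast at this
  exact this

lemma exp_half_lt : Real.exp (1 / 2) < 7 / 4 := by
  have h3 : Real.exp (1 / 2) ^ 2 = Real.exp 1 := by rw [← Real.exp_nat_mul]; norm_num
  nlinarith [Real.exp_pos (1 / 2), Real.exp_one_lt_d9]

lemma lt_exp_half : 8 / 5 < Real.exp (1 / 2) := by
  have h3 : Real.exp (1 / 2) ^ 2 = Real.exp 1 := by rw [← Real.exp_nat_mul]; norm_num
  nlinarith [Real.exp_pos (1 / 2), Real.exp_one_gt_d9]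

lemma exp_mem_ball_of_mem_vertStrip {t : ℂ} (ht : t ∈ vertStrip (1 / 2)) :
    Complex.exp t ∈ ball (0 : ℂ) (7 / 4) := by
  rw [mem_ball_zero_iff, Complex.norm_exp]
  exact (Real.exp_lt_exp.2 (abs_lt.1 (show |t.re| < 1 / 2 from ht)).2).trans exp_half_lt

/-- If `g` is close to `z ^ k` and `h` is real wherever `g` is, then in an annulus `h` is constant
on the level sets of `g`, and `g` has no critical points there. -/
lemma eq_and_deriv_ne_zero_of_eq {k : ℕ} (hk : 0 < k) {g h : ℂ → ℂ}
    (hg : DifferentiableOn ℂ g (ball 0 (7 / 4))) (hh : DifferentiableOn ℂ h (ball 0 (7 / 4)))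
    (hgk : ∀ z ∈ ball (0 : ℂ) (7 / 4), ‖g z - z ^ k‖ ≤ Real.exp (-(k / 2 : ℝ)) / (100 * k))
    (hreal : ∀ z ∈ ball (0 : ℂ) (7 / 4), (g z).im = 0 → (h z).im = 0) {z₀ z : ℂ}
    (h1 : Real.exp (-(1 / 16)) < ‖z₀‖) (h2 : ‖z₀‖ < Real.exp (1 / (16 * k)))
    (hz : z ∈ ball (0 : ℂ) (8 / 5)) (heq : g z = g z₀) : h z = h z₀ ∧ deriv g z ≠ 0 := by
  have hk1 : (1 : ℝ) ≤ k := by exact_mod_cast hk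
  have hkc : (k : ℂ) ≠ 0 := by exact_mod_cast hk.ne'
  obtain ⟨L, hL, hLk, hLg⟩ := exists_log_coordinate hk hg hgk
  have hLs : ∀ t ∈ vertStrip (1 / 2), ‖L t - t‖ ≤ 1 / 64 := fun t ht =>
    (hLk t ht).trans (by gcongr; linarith)
  obtain ⟨T, hT, hTm, hLT, hTL⟩ := exists_inverse_on_vertStrip hL hLs
  have hz₀0 : z₀ ≠ 0 := norm_pos_iff.1 ((Real.exp_pos _).trans h1)
  have hsmall : (1 : ℝ) / (16 * k) ≤ 1 / 16 := by gcongr; linarith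
  set τ₀ := Complex.log z₀ with hτ₀
  have hτ₀e : Complex.exp τ₀ = z₀ := Complex.exp_log hz₀0
  have hτ₀r : |τ₀.re| < 1 / 16 := by
    rw [hτ₀, Complex.log_re, abs_lt]
    constructor
    · rw [Real.lt_log_iff_exp_lt (norm_pos_iff.2 hz₀0)]; exact h1
    · rw [Real.log_lt_iff_lt_exp (norm_pos_iff.2 hz₀0)]
      exact h2.trans_le (Real.exp_le_exp.2 hsmall)
  have hτ₀m : τ₀ ∈ vertStrip (1 / 2) := lt_trans hτ₀r (by norm_num)
  have hz₀m := exp_mem_ball_of_mem_vertStrip hτ₀m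
  rw [hτ₀e] at hz₀m
  have hzm : z ∈ ball (0 : ℂ) (7 / 4) := ball_subset_ball (by norm_num) hz
  have hzlow : Real.exp (-(1 / 2)) < ‖z‖ := by
    by_contra! hcon
    have a1 : ‖g z₀‖ ≤ Real.exp (-(k / 2 : ℝ)) + Real.exp (-(k / 2 : ℝ)) / (100 * k) := by
      rw [← heq]
      have e : ‖z ^ k‖ ≤ Real.exp (-(k / 2 : ℝ)) := by
        rw [norm_pow]
        calc _ ≤ Real.exp (-(1 / 2)) ^ k := by gcongr
          _ = _ := by rw [← Real.exp_nat_mul]; congr 1; ring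
      have := norm_le_norm_add_norm_sub' (g z) (z ^ k)
      linarith [hgk z hzm]
    have a2 : Real.exp (-(k / 16 : ℝ)) ≤ ‖z₀ ^ k‖ := by
      rw [norm_pow]
      calc _ = Real.exp (-(1 / 16)) ^ k := by rw [← Real.exp_nat_mul]; congr 1; ring
        _ ≤ _ := by gcongr
    have a3 : ‖z₀ ^ k‖ ≤ ‖g z₀‖ + Real.exp (-(k / 2 : ℝ)) / (100 * k) := by
      have := norm_le_norm_add_norm_sub (g z₀) (z₀ ^ k)
      linarith [hgk z₀ hz₀m]
    have a4 : Real.exp (-(k / 16 : ℝ)) = Real.exp (-(k / 2 : ℝ)) * Real.exp (7 * k / 16) := by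
      rw [← Real.exp_add]; congr 1; ring
    have a5 : 1 + 7 / 16 ≤ Real.exp (7 * k / 16) := by
      have := Real.add_one_le_exp (7 * (k : ℝ) / 16)
      linarith
    have a6 : Real.exp (-(k / 2 : ℝ)) / (100 * k) ≤ Real.exp (-(k / 2 : ℝ)) / 100 := by
      gcongr; linarith
    have a7 := Real.exp_pos (-(k / 2 : ℝ))
    nlinarith
  have hz0 : z ≠ 0 := norm_pos_iff.1 ((Real.exp_pos _).trans hzlow)
  set τ := Complex.log z with hτ
  have hτe : Complex.exp τ = z := Complex.exp_log hz0
  have hτm : τ ∈ vertStrip (1 / 2) := by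
    change |τ.re| < 1 / 2
    rw [hτ, Complex.log_re, abs_lt]
    constructor
    · rw [Real.lt_log_iff_exp_lt (norm_pos_iff.2 hz0)]; exact hzlow
    · rw [Real.log_lt_iff_lt_exp (norm_pos_iff.2 hz0)]
      exact (mem_ball_zero_iff.1 hz).trans lt_exp_half
  have hexp : Complex.exp (k * L τ) = Complex.exp (k * L τ₀) := by
    rw [← hLg τ hτm, ← hLg τ₀ hτ₀m, hτe, hτ₀e, heq]
  obtain ⟨n, hn⟩ := Complex.exp_eq_exp_iff_exists_int.1 hexp
  have hn' : L τ = L τ₀ + n * (2 * (Real.pi / k : ℝ) * Complex.I) := by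
    apply mul_left_cancel₀ hkc
    rw [hn]; push_cast; field_simp
  have hre : (L τ).re = (L τ₀).re := by
    rw [hn']; simp
  have hLτ₀ : |(L τ₀).re| < 1 / 16 + 1 / 64 :=
    mem_vertStrip_of_norm_sub_le (d := 1 / 64) (by simpa using hτ₀r) (hLs _ hτ₀m)
  have hLτ₀m : L τ₀ ∈ vertStrip (1 / 8) := lt_trans hLτ₀ (by norm_num)
  have hLτm : L τ ∈ vertStrip (1 / 8) := by
    change |(L τ).re| < 1 / 8
    rw [hre]; exact hLτ₀m
  have hτm' : τ ∈ vertStrip (1 / 4) := by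
    refine mem_vertStrip_of_norm_sub_le (d := 1 / 64) (z := L τ) ?_ ?_
    · exact lt_trans hLτm (by norm_num)
    · rw [norm_sub_rev]; exact hLs _ hτm
  constructor
  · have hTm2 : ∀ s ∈ vertStrip (1 / 8), Complex.exp (T s) ∈ ball (0 : ℂ) (7 / 4) := fun s hs =>
      exp_mem_ball_of_mem_vertStrip (vertStrip_subset (by norm_num) (hTm hs))
    have hgT : ∀ s ∈ vertStrip (1 / 8), g (Complex.exp (T s)) = Complex.exp (k * s) := by
      intro s hs
      rw [hLg _ (vertStrip_subset (by norm_num) (hTm hs)), hLT s hs]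
    have hper := eq_add_int_mul_of_im_eq_zero (r := 1 / 8) (c := Real.pi / k) (by norm_num)
      (q := fun s => h (Complex.exp (T s))) (hh.comp hT.cexp hTm2)
      (fun s hs hs0 => hreal _ (hTm2 s hs) (by rw [hgT s hs, Complex.exp_im]; simp [hs0]))
      (fun s hs hs0 => hreal _ (hTm2 s hs) (by
        rw [hgT s hs, Complex.exp_im]
        have : (k * s : ℂ).im = Real.pi := by
          simp [hs0]; field_simp
        rw [this]; simp)) hLτ₀m n
    simp only [← hn', hTL τ hτm' hLτm, hTL τ₀ (lt_trans hτ₀r (by norm_num)) hLτ₀m, hτe, hτ₀e] at hper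
    exact hper
  · intro hd
    have hgz : HasDerivAt g 0 z := by
      rw [← hd]; exact (hg.differentiableAt (isOpen_ball.mem_nhds hzm)).hasDerivAt
    have e1 : HasDerivAt (fun t => g (Complex.exp t)) (0 * Complex.exp τ) τ := by
      rw [← hτe] at hgz
      exact hgz.comp τ (Complex.hasDerivAt_exp τ)
    have e2 : HasDerivAt (fun t => Complex.exp (k * L t))
        (Complex.exp (k * L τ) * (k * deriv L τ)) τ :=
      (((hL.differentiableAt ((isOpen_vertStrip _).mem_nhds hτm)).hasDerivAt).const_mul
        (k : ℂ)).cexp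
    have e3 : (fun t => g (Complex.exp t)) =ᶠ[𝓝 τ] fun t => Complex.exp (k * L t) := by
      filter_upwards [(isOpen_vertStrip _).mem_nhds hτm] with t ht using hLg t ht
    have e4 := e1.unique (e2.congr_of_eventuallyEq e3)
    rw [zero_mul] at e4
    have e5 : deriv L τ = 0 := by
      have := e4.symm
      simpa [Complex.exp_ne_zero, hkc] using this
    have := norm_deriv_sub_one_le hL hLs hτm'
    rw [e5] at this
    norm_num at this

lemma exists_apply_eq_of_near_pow {k : ℕ} (hk : 0 < k) {g : ℂ → ℂ}
    (hg : DifferentiableOn ℂ g (ball 0 (7 / 4)))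
    (hgk : ∀ z ∈ ball (0 : ℂ) (7 / 4), ‖g z - z ^ k‖ ≤ Real.exp (-(k / 2 : ℝ)) / (100 * k))
    {ζ : ℂ} (h1 : Real.exp (-(1 / 32)) < ‖ζ‖) (h2 : ‖ζ‖ < Real.exp (1 / 32)) :
    ∃ z : ℂ, ‖z‖ < Real.exp (1 / (16 * k)) ∧ g z = ζ := by
  have hk1 : (1 : ℝ) ≤ k := by exact_mod_cast hk
  have hkc : (k : ℂ) ≠ 0 := by exact_mod_cast hk.ne'
  obtain ⟨L, hL, hLk, hLg⟩ := exists_log_coordinate hk hg hgk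
  have hLs : ∀ t ∈ vertStrip (1 / 2), ‖L t - t‖ ≤ 1 / 64 := fun t ht =>
    (hLk t ht).trans (by gcongr; linarith)
  have hζ0 : ζ ≠ 0 := norm_pos_iff.1 ((Real.exp_pos _).trans h1)
  set s := Complex.log ζ / k with hs
  have hlr : |(Complex.log ζ).re| < 1 / 32 := by
    rw [Complex.log_re, abs_lt]
    constructor
    · rw [Real.lt_log_iff_exp_lt (norm_pos_iff.2 hζ0)]; exact h1
    · rw [Real.log_lt_iff_lt_exp (norm_pos_iff.2 hζ0)]; exact h2
  have hsr : |s.re| < 1 / 32 / k := by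
    rw [hs, Complex.div_natCast_re, abs_div, Nat.abs_cast]
    gcongr
  have hle : (1 : ℝ) / 32 / k ≤ 1 / 32 := div_le_self (by norm_num) hk1
  obtain ⟨t, ht, hLt⟩ := exists_eq_of_mem_vertStrip hL hLs (s := s)
    (lt_of_lt_of_le hsr (hle.trans (by norm_num)))
  have ht2 := vertStrip_subset (show (1 / 4 : ℝ) ≤ 1 / 2 by norm_num) ht
  refine ⟨Complex.exp t, ?_, ?_⟩
  · rw [Complex.norm_exp, Real.exp_lt_exp]
    have a := hLk t ht2
    rw [hLt, norm_sub_rev] at a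
    have := mem_vertStrip_of_norm_sub_le (r := 1 / 32 / k + 1 / (64 * k)) (by simpa using hsr) a
    refine (lt_of_abs_lt this).trans_le ?_
    have h3 : (0 : ℝ) ≤ (k : ℝ)⁻¹ := by positivity
    have e1 : 1 / (64 * (k : ℝ)) = 1 / 64 * (k : ℝ)⁻¹ := by rw [one_div, mul_inv]; ring
    have e2 : 1 / (16 * (k : ℝ)) = 1 / 16 * (k : ℝ)⁻¹ := by rw [one_div, mul_inv]; ring
    rw [e1, e2, div_eq_mul_inv]
    linarith
  · rw [hLg t ht2, hLt, hs, mul_div_cancel₀ _ hkc, Complex.exp_log hζ0]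

lemma differentiableOn_circleIntegral_div_sub {R ρ : ℝ} (hR : 0 ≤ R) {φ g : ℂ → ℂ}
    (hφ : ContinuousOn φ (sphere 0 R)) (hg : ContinuousOn g (sphere 0 R))
    (hρ : ∀ z ∈ sphere (0 : ℂ) R, ρ ≤ ‖g z‖) :
    DifferentiableOn ℂ (fun ζ => ∮ z in C(0, R), φ z / (g z - ζ)) (ball 0 ρ) := by
  intro ζ₀ hζ₀
  rw [mem_ball_zero_iff] at hζ₀
  have hcm : ∀ θ : ℝ, circleMap 0 R θ ∈ sphere (0 : ℂ) R := circleMap_mem_sphere 0 hR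
  have hlow : ∀ z ∈ sphere (0 : ℂ) R, ∀ ζ ∈ ball ζ₀ ((ρ - ‖ζ₀‖) / 2),
      (ρ - ‖ζ₀‖) / 2 ≤ ‖g z - ζ‖ := by
    intro z hz ζ hζ
    have h1 := hρ z hz
    rw [mem_ball, dist_eq_norm] at hζ
    have h2 := norm_sub_norm_le (g z) ζ
    have h3 := norm_sub_norm_le ζ ζ₀
    linarith
  have hr : 0 < (ρ - ‖ζ₀‖) / 2 := by linarith
  have hne : ∀ z ∈ sphere (0 : ℂ) R, ∀ ζ ∈ ball ζ₀ ((ρ - ‖ζ₀‖) / 2), g z - ζ ≠ 0 :=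
    fun z hz ζ hζ => norm_pos_iff.1 (hr.trans_le (hlow z hz ζ hζ))
  obtain ⟨M, hM⟩ := (isCompact_sphere (0 : ℂ) R).exists_bound_of_continuousOn hφ
  have hM0 : ∀ z ∈ sphere (0 : ℂ) R, 0 ≤ M := fun z hz => (norm_nonneg _).trans (hM z hz)
  have hcont : ∀ ζ ∈ ball ζ₀ ((ρ - ‖ζ₀‖) / 2), Continuous fun θ : ℝ =>
      deriv (circleMap 0 R) θ • (φ (circleMap 0 R θ) / (g (circleMap 0 R θ) - ζ)) := by
    intro ζ hζ
    simp only [deriv_circleMap]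
    have c1 : Continuous fun θ => φ (circleMap 0 R θ) :=
      hφ.comp_continuous (continuous_circleMap 0 R) hcm
    have c2 : Continuous fun θ => g (circleMap 0 R θ) :=
      hg.comp_continuous (continuous_circleMap 0 R) hcm
    have c3 := continuous_circleMap 0 R
    exact (c3.mul continuous_const).smul
      (c1.div (c2.sub continuous_const) fun θ => hne _ (hcm θ) ζ hζ)
  have hcont' : Continuous fun θ : ℝ =>
      deriv (circleMap 0 R) θ • (φ (circleMap 0 R θ) / (g (circleMap 0 R θ) - ζ₀) ^ 2) := by
    simp only [deriv_circleMap]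
    have c1 : Continuous fun θ => φ (circleMap 0 R θ) :=
      hφ.comp_continuous (continuous_circleMap 0 R) hcm
    have c2 : Continuous fun θ => g (circleMap 0 R θ) :=
      hg.comp_continuous (continuous_circleMap 0 R) hcm
    have c3 := continuous_circleMap 0 R
    exact (c3.mul continuous_const).smul
      (c1.div ((c2.sub continuous_const).pow 2)
        fun θ => pow_ne_zero 2 (hne _ (hcm θ) ζ₀ (mem_ball_self hr)))
  have := (intervalIntegral.hasDerivAt_integral_of_dominated_loc_of_deriv_le
    (μ := MeasureTheory.volume) (a := 0) (b := 2 * Real.pi)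
    (F := fun ζ θ => deriv (circleMap 0 R) θ •
      (φ (circleMap 0 R θ) / (g (circleMap 0 R θ) - ζ)))
    (F' := fun ζ θ => deriv (circleMap 0 R) θ •
      (φ (circleMap 0 R θ) / (g (circleMap 0 R θ) - ζ) ^ 2))
    (bound := fun _ => R * (M / ((ρ - ‖ζ₀‖) / 2) ^ 2))
    (ball_mem_nhds ζ₀ hr)
    (by filter_upwards [ball_mem_nhds ζ₀ hr] with ζ hζ using (hcont ζ hζ).aestronglyMeasurable)
    ((hcont ζ₀ (mem_ball_self hr)).intervalIntegrable _ _)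
    hcont'.aestronglyMeasurable
    (by
      refine Eventually.of_forall fun θ _ ζ hζ => ?_
      rw [norm_smul, norm_div, norm_pow, deriv_circleMap]
      have e : ‖circleMap 0 R θ * Complex.I‖ = R := by
        simp [abs_of_nonneg hR]
      rw [e]
      gcongr
      · exact hM0 _ (hcm θ)
      · exact hM _ (hcm θ)
      · exact hlow _ (hcm θ) ζ hζ)
    intervalIntegrable_const
    (by
      refine Eventually.of_forall fun θ _ ζ hζ => ?_
      have h1 := hne _ (hcm θ) ζ hζ
      have h2 : HasDerivAt (fun ζ => g (circleMap 0 R θ) - ζ) (-1) ζ := by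
        simpa using (hasDerivAt_id ζ).const_sub (g (circleMap 0 R θ))
      have h3 := ((hasDerivAt_const ζ (φ (circleMap 0 R θ))).div h2 h1).const_smul
        (deriv (circleMap 0 R) θ)
      exact h3.congr_deriv (by simp))).2
  exact this.differentiableAt.differentiableWithinAt

lemma circleIntegral_deriv_div_sub_eq {k : ℕ} (hk : 0 < k) {g : ℂ → ℂ}
    (hg : DifferentiableOn ℂ g (ball 0 (7 / 4)))
    (hgk : ∀ z ∈ ball (0 : ℂ) (7 / 4), ‖g z - z ^ k‖ ≤ 1 / 100) {ζ : ℂ} (hζ : ‖ζ‖ < 5 / 4) :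
    (∮ z in C(0, 3 / 2), deriv g z / (g z - ζ)) = 2 * Real.pi * Complex.I * k := by
  have hsub : sphere (0 : ℂ) (3 / 2) ⊆ ball 0 (7 / 4) :=
    sphere_subset_closedBall.trans (closedBall_subset_ball (by norm_num))
  have hpow : (3 / 2 : ℝ) ≤ (3 / 2) ^ k := le_self_pow₀ (by norm_num) hk.ne'
  have hz0 : ∀ z ∈ sphere (0 : ℂ) (3 / 2), z ≠ 0 := by
    rintro z hz rfl
    norm_num at hz
  have hsm : ∀ z ∈ sphere (0 : ℂ) (3 / 2), ‖(g z - z ^ k - ζ) / z ^ k‖ < 1 := by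
    intro z hz
    have hn : ‖z‖ = 3 / 2 := by simpa using hz
    rw [norm_div, norm_pow, hn, div_lt_one (by positivity)]
    have := norm_sub_le (g z - z ^ k) ζ
    linarith [hgk z (hsub hz)]
  have heq : ∀ z ∈ sphere (0 : ℂ) (3 / 2), 1 + (g z - z ^ k - ζ) / z ^ k = (g z - ζ) / z ^ k := by
    intro z hz
    have := pow_ne_zero k (hz0 z hz)
    field_simp
    ring
  have hslit : ∀ z ∈ sphere (0 : ℂ) (3 / 2), (g z - ζ) / z ^ k ∈ Complex.slitPlane := by
    intro z hz
    rw [← heq z hz]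
    exact Complex.mem_slitPlane_of_norm_lt_one (hsm z hz)
  have hne : ∀ z ∈ sphere (0 : ℂ) (3 / 2), g z - ζ ≠ 0 := by
    intro z hz h0
    have := Complex.slitPlane_ne_zero (hslit z hz)
    simp [h0] at this
  have hint : (∮ z in C(0, 3 / 2), (deriv g z / (g z - ζ) - k * (z - 0)⁻¹)) = 0 := by
    refine circleIntegral.integral_eq_zero_of_hasDerivWithinAt (by norm_num)
      (f := fun z => Complex.log ((g z - ζ) / z ^ k)) fun z hz => ?_
    have d1 : HasDerivAt g (deriv g z) z :=
      (hg.differentiableAt (isOpen_ball.mem_nhds (hsub hz))).hasDerivAt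
    have d2 := (((d1.sub_const ζ).div (hasDerivAt_pow k z) (pow_ne_zero k (hz0 z hz))).clog
      (hslit z hz)).hasDerivWithinAt (s := sphere 0 (3 / 2))
    refine d2.congr_deriv ?_
    have a1 := hz0 z hz
    have a2 := hne z hz
    obtain ⟨j, rfl⟩ : ∃ j, k = j + 1 := ⟨k - 1, by omega⟩
    simp only [Nat.add_sub_cancel, sub_zero, Pi.div_apply]
    push_cast
    field_simp
    ring
  have hcd : ContinuousOn (deriv g) (sphere 0 (3 / 2)) :=
    (hg.deriv isOpen_ball).continuousOn.mono hsub
  rw [circleIntegral.integral_sub] at hint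
  · rw [circleIntegral.integral_const_mul, circleIntegral.integral_sub_center_inv _ (by norm_num)]
      at hint
    linear_combination hint
  · exact (hcd.div ((hg.continuousOn.mono hsub).sub continuousOn_const) hne).circleIntegrable
      (by norm_num)
  · refine ContinuousOn.circleIntegrable (by norm_num) ?_
    refine continuousOn_const.mul (ContinuousOn.inv₀ (by fun_prop) fun z hz => ?_)
    simpa using hz0 z hz

/-- Level sets of `g` on which `h` is constant give no contribution to the Cauchy type integral. -/
lemma circleIntegral_sub_mul_deriv_div_sub_eq_zero {g h : ℂ → ℂ} {R r : ℝ} (hr : 0 ≤ r)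
    (hrR : r < R) (hg : DifferentiableOn ℂ g (ball 0 R)) (hh : DifferentiableOn ℂ h (ball 0 R))
    {w c : ℂ} (hlev : ∀ z ∈ ball (0 : ℂ) R, g z = w → h z = c ∧ deriv g z ≠ 0)
    (hne : ∀ z ∈ sphere (0 : ℂ) r, g z ≠ w) :
    (∮ z in C(0, r), (h z - c) * deriv g z / (g z - w)) = 0 := by
  classical
  set F : ℂ → ℂ := fun z => if g z = w then deriv h z else (h z - c) * deriv g z / (g z - w) with hF
  have hFd : ∀ z ∈ ball (0 : ℂ) R, DifferentiableAt ℂ F z := by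
    intro z hz
    have hn := isOpen_ball.mem_nhds hz
    have hgz := hg.differentiableAt hn
    have hhz := hh.differentiableAt hn
    have hg'z := (hg.deriv isOpen_ball).differentiableAt hn
    by_cases hw : g z = w
    · obtain ⟨h1, h2⟩ := hlev z hz hw
      have dg : DifferentiableAt ℂ (dslope g z) z :=
        ((Complex.differentiableOn_dslope hn).2 hg).differentiableAt hn
      have dh : DifferentiableAt ℂ (dslope h z) z :=
        ((Complex.differentiableOn_dslope hn).2 hh).differentiableAt hn
      have hd0 : dslope g z z ≠ 0 := by rwa [dslope_same]
      refine (dh.mul (hg'z.div dg hd0)).congr_of_eventuallyEq ?_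
      filter_upwards [dg.continuousAt.eventually_ne hd0] with x hx
      by_cases hxz : x = z
      · subst hxz
        simp only [hF, hw, if_true, Pi.mul_apply, Pi.div_apply, dslope_same]
        rw [div_self h2, mul_one]
      · rw [dslope_of_ne _ hxz, slope_def_field, hw] at hx
        have hxz' : x - z ≠ 0 := sub_ne_zero.2 hxz
        have hgx : g x - w ≠ 0 := fun h0 => hx (by rw [h0, zero_div])
        simp only [hF, if_neg (sub_ne_zero.1 hgx), Pi.mul_apply, Pi.div_apply,
          dslope_of_ne _ hxz, slope_def_field, hw, h1]
        field_simp
    · have := ((hhz.sub_const c).mul hg'z).div (hgz.sub_const w) (sub_ne_zero.2 hw)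
      refine this.congr_of_eventuallyEq ?_
      filter_upwards [hgz.continuousAt.eventually_ne hw] with x hx
      simp [hF, hx]
  have hsub : closedBall (0 : ℂ) r ⊆ ball 0 R := closedBall_subset_ball hrR
  have hF0 := Complex.circleIntegral_eq_zero_of_differentiable_on_off_countable hr countable_empty
    (f := F) (fun z hz => (hFd z (hsub hz)).continuousAt.continuousWithinAt)
    (fun z hz => hFd z (hsub (ball_subset_closedBall hz.1)))
  refine Eq.trans ?_ hF0
  refine circleIntegral.integral_congr (E := ℂ) hr fun z hz => ?_
  simp [hF, hne z hz]

/-- If `g` is close to `z ^ k` and `h` is real wherever `g` is, then `h` factors through `g`. -/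
lemma exists_comp_eq_of_near_pow {k : ℕ} (hk : 0 < k) {g h : ℂ → ℂ}
    (hg : DifferentiableOn ℂ g (ball 0 (7 / 4))) (hh : DifferentiableOn ℂ h (ball 0 (7 / 4)))
    (hgk : ∀ z ∈ ball (0 : ℂ) (7 / 4), ‖g z - z ^ k‖ ≤ Real.exp (-(k / 2 : ℝ)) / (100 * k))
    (hreal : ∀ z ∈ ball (0 : ℂ) (7 / 4), (g z).im = 0 → (h z).im = 0) :
    ∃ H : ℂ → ℂ, DifferentiableOn ℂ H (ball 0 (5 / 4)) ∧
      ∀ z ∈ ball (0 : ℂ) (Real.exp (1 / (16 * k))), h z = H (g z) := by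
  have hk1 : (1 : ℝ) ≤ k := by exact_mod_cast hk
  have hkc : (k : ℂ) ≠ 0 := by exact_mod_cast hk.ne'
  have hδ : Real.exp (-(k / 2 : ℝ)) / (100 * k) ≤ 1 / 100 := by
    have : Real.exp (-(k / 2 : ℝ)) ≤ 1 := Real.exp_le_one_iff.2 (by linarith)
    gcongr
    linarith
  have hgk' : ∀ z ∈ ball (0 : ℂ) (7 / 4), ‖g z - z ^ k‖ ≤ 1 / 100 := fun z hz =>
    (hgk z hz).trans hδ
  have he16 : Real.exp (1 / 16) < 6 / 5 := by
    have := Real.exp_bound_div_one_sub_of_interval (x := 1 / 16) (by norm_num) (by norm_num)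
    norm_num at this ⊢
    linarith
  have hrad : Real.exp (1 / (16 * k)) < 6 / 5 := by
    refine lt_of_le_of_lt (Real.exp_le_exp.2 ?_) he16
    gcongr; linarith
  have hballsub : ball (0 : ℂ) (Real.exp (1 / (16 * k))) ⊆ ball 0 (7 / 4) :=
    ball_subset_ball (by linarith)
  have hgsmall : ∀ z ∈ ball (0 : ℂ) (Real.exp (1 / (16 * k))), ‖g z‖ < 5 / 4 := by
    intro z hz
    have h1 := hgk' z (hballsub hz)
    have h2 := norm_le_norm_add_norm_sub' (g z) (z ^ k)
    have h3 : ‖z ^ k‖ ≤ Real.exp (1 / 16) := by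
      rw [norm_pow]
      calc ‖z‖ ^ k ≤ Real.exp (1 / (16 * k)) ^ k := by
            gcongr; exact (mem_ball_zero_iff.1 hz).le
        _ = _ := by rw [← Real.exp_nat_mul]; congr 1; field_simp
    linarith
  have hsph : sphere (0 : ℂ) (3 / 2) ⊆ ball 0 (7 / 4) :=
    sphere_subset_closedBall.trans (closedBall_subset_ball (by norm_num))
  have hglarge : ∀ z ∈ sphere (0 : ℂ) (3 / 2), 5 / 4 ≤ ‖g z‖ := by
    intro z hz
    have h1 := hgk' z (hsph hz)
    have h2 := norm_le_norm_add_norm_sub (g z) (z ^ k)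
    have h3 : (3 / 2 : ℝ) ≤ ‖z ^ k‖ := by
      rw [norm_pow, mem_sphere_zero_iff_norm.1 hz]
      exact le_self_pow₀ (by norm_num) hk.ne'
    linarith
  have hcg := hg.continuousOn.mono hsph
  have hcg' : ContinuousOn (deriv g) (sphere 0 (3 / 2)) :=
    (hg.deriv isOpen_ball).continuousOn.mono hsph
  have hch := hh.continuousOn.mono hsph
  set H : ℂ → ℂ := fun ζ => (2 * Real.pi * Complex.I * k)⁻¹ *
    ∮ z in C(0, 3 / 2), (h z * deriv g z) / (g z - ζ) with hH
  have hHd : DifferentiableOn ℂ H (ball 0 (5 / 4)) :=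
    (differentiableOn_circleIntegral_div_sub (by norm_num) (hch.mul hcg') hcg hglarge).const_mul _
  refine ⟨H, hHd, ?_⟩
  have hpi : (2 * Real.pi * Complex.I * k : ℂ) ≠ 0 := by
    simp [hkc, Real.pi_ne_zero, Complex.I_ne_zero]
  have hann : ∀ z₀ : ℂ, Real.exp (-(1 / 16)) < ‖z₀‖ → ‖z₀‖ < Real.exp (1 / (16 * k)) →
      h z₀ = H (g z₀) := by
    intro z₀ h1 h2
    have hs := hgsmall z₀ (mem_ball_zero_iff.2 h2)
    have hne : ∀ z ∈ sphere (0 : ℂ) (3 / 2), g z ≠ g z₀ := by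
      intro z hz h0
      have := hglarge z hz
      rw [h0] at this
      linarith
    have hi := circleIntegral_sub_mul_deriv_div_sub_eq_zero (r := 3 / 2) (R := 8 / 5)
      (by norm_num) (by norm_num)
      (hg.mono (ball_subset_ball (by norm_num))) (hh.mono (ball_subset_ball (by norm_num)))
      (fun z hz hzw => eq_and_deriv_ne_zero_of_eq hk hg hh hgk hreal h1 h2 hz hzw) hne
    have hi2 : (∮ z in C(0, 3 / 2), (h z * deriv g z / (g z - g z₀)
        - h z₀ * (deriv g z / (g z - g z₀)))) = 0 := by
      rw [← hi]
      congr 1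
      ext z
      ring
    have hcd : ContinuousOn (fun z => g z - g z₀) (sphere 0 (3 / 2)) := hcg.sub continuousOn_const
    have hcn : ∀ z ∈ sphere (0 : ℂ) (3 / 2), g z - g z₀ ≠ 0 := fun z hz => sub_ne_zero.2 (hne z hz)
    have i1 : CircleIntegrable (fun z => h z * deriv g z / (g z - g z₀)) 0 (3 / 2) :=
      ((hch.mul hcg').div hcd hcn).circleIntegrable (by norm_num)
    have i2 : CircleIntegrable (fun z => h z₀ * (deriv g z / (g z - g z₀))) 0 (3 / 2) :=
      (continuousOn_const.mul (hcg'.div hcd hcn)).circleIntegrable (by norm_num)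
    rw [circleIntegral.integral_sub i1 i2,
      circleIntegral.integral_const_mul, circleIntegral_deriv_div_sub_eq hk hg hgk' hs] at hi2
    rw [hH]
    simp only
    rw [sub_eq_zero.1 hi2]
    field_simp
  have h1lt : (1 : ℝ) < Real.exp (1 / (16 * k)) := Real.one_lt_exp_iff.2 (by positivity)
  have hone : (1 : ℂ) ∈ ball (0 : ℂ) (Real.exp (1 / (16 * k))) := by simpa using h1lt
  have hHg : DifferentiableOn ℂ (fun z => H (g z)) (ball 0 (Real.exp (1 / (16 * k)))) :=
    hHd.comp (hg.mono hballsub) fun z hz => mem_ball_zero_iff.2 (hgsmall z hz)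
  refine ((hh.mono hballsub).analyticOnNhd isOpen_ball).eqOn_of_preconnected_of_eventuallyEq
    (hHg.analyticOnNhd isOpen_ball) (convex_ball _ _).isPreconnected hone ?_
  have hopen : IsOpen {z : ℂ | Real.exp (-(1 / 16)) < ‖z‖} :=
    isOpen_lt continuous_const continuous_norm
  filter_upwards [hopen.mem_nhds (by simp : (1 : ℂ) ∈ {z : ℂ | Real.exp (-(1 / 16)) < ‖z‖}),
    isOpen_ball.mem_nhds hone] with z hz1 hz2
  exact hann z hz1 (mem_ball_zero_iff.1 hz2)

/-- Harnack type estimate for the quotient of two harmonic functions with the same sign, when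
the denominator is close to the imaginary part of `z ^ k`. -/
theorem abs_im_div_im_sub_le_of_near_pow {k : ℕ} (hk : 0 < k) {g h : ℂ → ℂ}
    (hg : DifferentiableOn ℂ g (ball 0 (7 / 4))) (hh : DifferentiableOn ℂ h (ball 0 (7 / 4)))
    (hgk : ∀ z ∈ ball (0 : ℂ) (7 / 4), ‖g z - z ^ k‖ ≤ Real.exp (-(k / 2 : ℝ)) / (100 * k))
    (hreal : ∀ z ∈ ball (0 : ℂ) (7 / 4), (g z).im = 0 → (h z).im = 0)
    (hpos : ∀ z ∈ ball (0 : ℂ) (7 / 4), 0 ≤ (g z).im * (h z).im) {a b : ℂ}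
    (ha : ‖a‖ < 1 / 2) (hb : ‖b‖ < 1 / 2) (ha' : (g a).im ≠ 0) (hb' : (g b).im ≠ 0) :
    |(h a).im / (g a).im - (h b).im / (g b).im| ≤
      32768 * ((7 / 4) ^ k + 1) * ‖a - b‖ * ((h a).im / (g a).im) := by
  have hk1 : (1 : ℝ) ≤ k := by exact_mod_cast hk
  have hδ : Real.exp (-(k / 2 : ℝ)) / (100 * k) ≤ 1 / 100 := by
    have : Real.exp (-(k / 2 : ℝ)) ≤ 1 := Real.exp_le_one_iff.2 (by linarith)
    gcongr
    linarith
  obtain ⟨H, hH, hHg⟩ := exists_comp_eq_of_near_pow hk hg hh hgk hreal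
  have h1lt : (1 : ℝ) < Real.exp (1 / (16 * k)) := Real.one_lt_exp_iff.2 (by positivity)
  have hrad : Real.exp (1 / (16 * k)) < 7 / 4 := by
    refine lt_of_le_of_lt (Real.exp_le_exp.2 ?_) exp_half_lt
    rw [div_le_div_iff_of_pos_left (by norm_num) (by positivity) (by norm_num)]
    linarith
  have hval : ∀ ζ : ℂ, Real.exp (-(1 / 32)) < ‖ζ‖ → ‖ζ‖ < Real.exp (1 / 32) →
      ∃ z ∈ ball (0 : ℂ) (7 / 4), g z = ζ ∧ h z = H ζ := by
    intro ζ h1 h2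
    obtain ⟨z, hz, hgz⟩ := exists_apply_eq_of_near_pow hk hg hgk h1 h2
    exact ⟨z, mem_ball_zero_iff.2 (hz.trans hrad), hgz, hgz ▸ hHg z (mem_ball_zero_iff.2 hz)⟩
  have hsub1 : ball (1 : ℂ) (1 / 64) ⊆ ball 0 (5 / 4) := by
    intro z hz
    have h1 : ‖z - 1‖ < 1 / 64 := by simpa [dist_eq_norm] using hz
    have h2 := norm_sub_norm_le z 1
    rw [norm_one] at h2
    rw [mem_ball_zero_iff]; linarith
  have hHc : DifferentiableOn ℂ (fun s => conj (H (conj s))) (ball 0 (5 / 4)) := by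
    intro s hs
    have hs' : conj s ∈ ball (0 : ℂ) (5 / 4) := by simpa using hs
    exact ((differentiableAt_conj_conj_iff (f := H)).2
      (hH.differentiableAt (isOpen_ball.mem_nhds hs'))).differentiableWithinAt
  have hloc : EqOn H (fun s => conj (H (conj s))) (ball 1 (1 / 64)) := by
    refine eqOn_of_eqOn_horizontal_line isOpen_ball (convex_ball _ _).isPreconnected
      (hH.mono hsub1) (hHc.mono hsub1) (p := 1) (mem_ball_self (by norm_num)) fun z hz hz0 => ?_
    have hz0' : z.im = 0 := by simpa using hz0
    have h1 : ‖z - 1‖ < 1 / 64 := by simpa [dist_eq_norm] using hz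
    have h2 := norm_sub_norm_le z 1
    have h3 := norm_sub_norm_le 1 z
    rw [norm_sub_rev] at h3
    rw [norm_one] at h2 h3
    have h4 : Real.exp (-(1 / 32)) ≤ 32 / 33 := by
      rw [Real.exp_neg, inv_le_comm₀ (Real.exp_pos _) (by norm_num)]
      have := Real.add_one_le_exp (1 / 32)
      norm_num at this ⊢
      linarith
    have h5 := Real.add_one_le_exp (1 / 32)
    obtain ⟨w, hw, hgw, hhw⟩ := hval z (by linarith) (by linarith)
    have hzc : conj z = z := Complex.conj_eq_iff_im.2 hz0'
    simp only [hzc]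
    refine (Complex.conj_eq_iff_im.2 ?_).symm
    rw [← hhw]
    exact hreal w hw (by rw [hgw, hz0'])
  have hglob : EqOn H (fun s => conj (H (conj s))) (ball 0 (5 / 4)) :=
    (hH.analyticOnNhd isOpen_ball).eqOn_of_preconnected_of_eventuallyEq
      (hHc.analyticOnNhd isOpen_ball) (convex_ball _ _).isPreconnected
      (hsub1 (mem_ball_self (by norm_num)))
      (hloc.eventuallyEq_of_mem (ball_mem_nhds _ (by norm_num)))
  have hsymm : ∀ z ∈ ball (0 : ℂ) 1, (H (conj z)).im = -(H z).im := by
    intro z hz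
    rw [hglob (ball_subset_ball (by norm_num) hz)]
    simp
  have hposc : ∀ s : ℂ, ‖s‖ = 1 → 0 ≤ s.im * (H s).im := by
    intro s hs
    obtain ⟨w, hw, hgw, hhw⟩ := hval s (by rw [hs]; simp) (by rw [hs]; simp)
    rw [← hhw, ← hgw]
    exact hpos w hw
  have hsmall : ∀ z : ℂ, ‖z‖ < 1 / 2 → ‖g z‖ ≤ 3 / 4 := by
    intro z hz
    have h1 := (hgk z (mem_ball_zero_iff.2 (by linarith))).trans hδ
    have h2 := norm_le_norm_add_norm_sub' (g z) (z ^ k)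
    have h3 : ‖z ^ k‖ ≤ 1 / 2 := by
      rw [norm_pow]
      exact (pow_le_of_le_one (norm_nonneg _) (by linarith) hk.ne').trans hz.le
    linarith
  have hlip : ‖g a - g b‖ ≤ ((7 / 4) ^ k + 1) * ‖a - b‖ := by
    refine (convex_ball (0 : ℂ) (1 / 2)).norm_image_sub_le_of_norm_deriv_le (f := g)
      (fun x hx => hg.differentiableAt (isOpen_ball.mem_nhds
        (ball_subset_ball (by norm_num) hx))) (fun x hx => ?_)
      (mem_ball_zero_iff.2 hb) (mem_ball_zero_iff.2 ha)
    have hx' : ‖x‖ < 1 / 2 := mem_ball_zero_iff.1 hx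
    have hsub : closedBall x 1 ⊆ ball 0 (7 / 4) := by
      intro z hz
      have h1 : ‖z - x‖ ≤ 1 := by simpa [dist_eq_norm] using hz
      have h2 := norm_sub_norm_le z x
      rw [mem_ball_zero_iff]; linarith
    have := Complex.norm_deriv_le_of_forall_mem_sphere_norm_le (f := g) (R := 1)
      (C := (7 / 4) ^ k + 1) (c := x) one_pos ((hg.mono hsub).diffContOnCl_ball subset_rfl)
      fun z hz => by
        have hz' := hsub (sphere_subset_closedBall hz)
        have h1 := (hgk z hz').trans hδ
        have h2 := norm_le_norm_add_norm_sub' (g z) (z ^ k)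
        have h3 : ‖z ^ k‖ ≤ (7 / 4) ^ k := by
          rw [norm_pow]
          gcongr
          exact (mem_ball_zero_iff.1 hz').le
        linarith
    simpa using this
  have hbase := abs_im_div_im_sub_le hH hsymm hposc (hsmall a ha) (hsmall b hb) ha' hb'
  rw [← hHg a (mem_ball_zero_iff.2 (by linarith)), ← hHg b (mem_ball_zero_iff.2 (by linarith))]
    at hbase
  have hq : 0 ≤ (h a).im / (g a).im := by
    rw [← mul_div_mul_right _ _ ha', ← sq]
    have := hpos a (mem_ball_zero_iff.2 (by linarith))
    rw [mul_comm] at this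
    positivity
  refine hbase.trans (mul_le_mul_of_nonneg_right ?_ hq)
  linarith

lemma norm_fderiv_le_of_forall_abs_sub_le {E : Type*} [NormedAddCommGroup E] [NormedSpace ℝ E]
    {f w : E → ℝ} {N : Set E} {C : ℝ} (hN : IsOpen N) (hw : ContinuousOn w N)
    (hlip : ∀ a ∈ N, ∀ b ∈ N, w a ≠ 0 → w b ≠ 0 → |f a - f b| ≤ C * ‖a - b‖ * f a)
    (hC : 0 ≤ C) {x : E} (hx : x ∈ N) (hwx : w x ≠ 0) (hfx : 0 ≤ f x) :
    ‖fderiv ℝ f x‖ ≤ C * f x := by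
  refine norm_fderiv_le_of_lip' ℝ (mul_nonneg hC hfx) ?_
  have hNx := hN.mem_nhds hx
  filter_upwards [hNx, (hw.continuousAt hNx).eventually_ne hwx] with y hy hwy
  rw [Real.norm_eq_abs, abs_sub_comm, norm_sub_rev]
  linarith [hlip x hx y hy hwx hwy]

/-- The gradient form of `abs_im_div_im_sub_le_of_near_pow`, for rescaled functions. -/
lemma norm_fderiv_im_div_im_le_of_rescaled_near_pow {k : ℕ} (hk : 0 < k) {g h : ℂ → ℂ} {p c : ℂ}
    {α β : ℝ} (hc : c ≠ 0) (hα : 0 < α)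
    (hmaps : ∀ z ∈ ball (0 : ℂ) (7 / 4), p + c * z ∈ ball (0 : ℂ) 1)
    (hg : DifferentiableOn ℂ g (ball 0 1)) (hh : DifferentiableOn ℂ h (ball 0 1))
    (hreal : ∀ z ∈ ball (0 : ℂ) 1, (g z).im = 0 → (h z).im = 0)
    (hpos : ∀ z ∈ ball (0 : ℂ) 1, (g z).im ≠ 0 → 0 < (h z).im * (g z).im)
    (hgk : ∀ z ∈ ball (0 : ℂ) (7 / 4),
      ‖α * (g (p + c * z) - β) - z ^ k‖ ≤ Real.exp (-(k / 2 : ℝ)) / (100 * k)) {x : ℂ}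
    (hx : x ∈ ball p (‖c‖ / 2)) (hgx : (g x).im ≠ 0) :
    ‖fderiv ℝ (fun z => (h z).im / (g z).im) x‖ ≤
      32768 * ((7 / 4) ^ k + 1) / ‖c‖ * ((h x).im / (g x).im) := by
  have hcn : 0 < ‖c‖ := norm_pos_iff.2 hc
  have hcoord : ∀ y ∈ ball p (‖c‖ / 2), ‖(y - p) / c‖ < 1 / 2 ∧ p + c * ((y - p) / c) = y := by
    intro y hy
    rw [mem_ball, dist_eq_norm] at hy
    refine ⟨?_, by field_simp; ring⟩
    rw [norm_div, div_lt_iff₀ hcn]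
    linarith
  have hin : ∀ y ∈ ball p (‖c‖ / 2), y ∈ ball (0 : ℂ) 1 := by
    intro y hy
    obtain ⟨h1, h2⟩ := hcoord y hy
    rw [← h2]
    exact hmaps _ (mem_ball_zero_iff.2 (by linarith))
  have hGim : ∀ z : ℂ, (α * (g (p + c * z) - β) : ℂ).im = α * (g (p + c * z)).im := by
    intro z; simp
  have hGd : DifferentiableOn ℂ (fun z => (α * (g (p + c * z) - β) : ℂ)) (ball 0 (7 / 4)) :=
    ((hg.comp (by fun_prop) hmaps).sub_const _).const_mul _
  have hHd : DifferentiableOn ℂ (fun z => h (p + c * z)) (ball 0 (7 / 4)) :=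
    hh.comp (by fun_prop) hmaps
  have key := fun {a b : ℂ} => abs_im_div_im_sub_le_of_near_pow (a := a) (b := b) hk hGd hHd hgk
    (fun z hz h0 => by
      rw [hGim, mul_eq_zero] at h0
      exact hreal _ (hmaps z hz) (h0.resolve_left hα.ne'))
    (fun z hz => by
      rw [hGim]
      by_cases h0 : (g (p + c * z)).im = 0
      · simp [h0]
      · nlinarith [hpos _ (hmaps z hz) h0])
  simp only [hGim] at key
  have hgc : ContinuousOn (fun z => (g z).im) (ball p (‖c‖ / 2)) :=
    Complex.continuous_im.comp_continuousOn (hg.continuousOn.mono hin)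
  refine norm_fderiv_le_of_forall_abs_sub_le isOpen_ball hgc ?_ (by positivity) hx hgx ?_
  · intro a ha b hb ha0 hb0
    obtain ⟨a1, a2⟩ := hcoord a ha
    obtain ⟨b1, b2⟩ := hcoord b hb
    have := key a1 b1 (by rw [a2]; exact mul_ne_zero hα.ne' ha0)
      (by rw [b2]; exact mul_ne_zero hα.ne' hb0)
    rw [a2, b2] at this
    have e1 : (h a).im / (α * (g a).im) - (h b).im / (α * (g b).im) =
        α⁻¹ * ((h a).im / (g a).im - (h b).im / (g b).im) := by
      field_simp
    have e2 : (h a).im / (α * (g a).im) = α⁻¹ * ((h a).im / (g a).im) := by field_simp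
    have e3 : ‖(a - p) / c - (b - p) / c‖ = ‖a - b‖ / ‖c‖ := by
      rw [← norm_div]; congr 1; ring
    rw [e1, e2, e3, abs_mul, abs_of_pos (inv_pos.2 hα), mul_left_comm] at this
    have h3 := le_of_mul_le_mul_left this (inv_pos.2 hα)
    refine h3.trans (le_of_eq ?_)
    ring
  · have := hpos x (hin x hx) hgx
    rw [← mul_div_mul_right _ _ hgx, ← sq]
    positivity

/-- Near every point, the logarithmic gradient of the quotient of two harmonic functions of the
same sign is bounded. -/
lemma exists_mem_nhds_norm_fderiv_im_div_im_le {g h : ℂ → ℂ}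
    (hg : DifferentiableOn ℂ g (ball 0 1)) (hh : DifferentiableOn ℂ h (ball 0 1))
    (hreal : ∀ z ∈ ball (0 : ℂ) 1, (g z).im = 0 → (h z).im = 0)
    (hpos : ∀ z ∈ ball (0 : ℂ) 1, (g z).im ≠ 0 → 0 < (h z).im * (g z).im) {p : ℂ}
    (hp : p ∈ ball (0 : ℂ) 1) :
    ∃ N ∈ 𝓝 p, ∃ C : ℝ, ∀ x ∈ N, (g x).im ≠ 0 →
      ‖fderiv ℝ (fun z => (h z).im / (g z).im) x‖ ≤ C * ((h x).im / (g x).im) := by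
  have hpn := isOpen_ball.mem_nhds hp
  have hga := hg.analyticAt hpn
  have hha := hh.analyticAt hpn
  by_cases hgp : (g p).im = 0
  · by_cases hev : ∀ᶠ z in 𝓝 p, g z - g p = 0
    · refine ⟨_, hev, 0, fun x hx hgx => absurd ?_ hgx⟩
      rw [sub_eq_zero.1 hx, hgp]
    obtain ⟨n, φ, hφ, hφp, hφe⟩ :=
      (hga.sub analyticAt_const).exists_eventuallyEq_pow_smul_nonzero_iff.2 hev
    have hn : n ≠ 0 := by
      rintro rfl
      have := hφe.self_of_nhds
      simp at this
      exact hφp this.symm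
    obtain ⟨w, hw⟩ := IsAlgClosed.exists_pow_nat_eq ((‖φ p‖ : ℂ) / φ p) (Nat.pos_of_ne_zero hn)
    have hφn : 0 < ‖φ p‖ := norm_pos_iff.2 hφp
    have hw1 : ‖w‖ = 1 := by
      have : ‖w‖ ^ n = 1 := by
        rw [← norm_pow, hw]; simp [hφn.ne']
      exact (pow_eq_one_iff_of_nonneg (norm_nonneg _) hn).1 this
    have hn' : (0 : ℝ) < n := by exact_mod_cast Nat.pos_of_ne_zero hn
    set δ : ℝ := Real.exp (-(n / 2 : ℝ)) / (100 * n) * ‖φ p‖ / (7 / 4) ^ n with hδ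
    have hδ0 : 0 < δ := by positivity
    obtain ⟨r, hr, hball⟩ := Metric.eventually_nhds_iff.1
      ((hφe.and hpn).and (hφ.continuousAt.eventually (ball_mem_nhds _ hδ0)))
    have hcn : ‖((r / 2 : ℝ) : ℂ) * w‖ = r / 2 := by
      rw [norm_mul, hw1, mul_one, Complex.norm_real, Real.norm_eq_abs, abs_of_pos (by positivity)]
    have hc0 : ((r / 2 : ℝ) : ℂ) * w ≠ 0 := norm_pos_iff.1 (by rw [hcn]; positivity)
    have hdist : ∀ z ∈ ball (0 : ℂ) (7 / 4), dist (p + (r / 2 : ℝ) * w * z) p < r := by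
      intro z hz
      rw [mem_ball_zero_iff] at hz
      rw [dist_eq_norm, add_sub_cancel_left, norm_mul, hcn]
      nlinarith
    have hα : 0 < 1 / (‖φ p‖ * (r / 2) ^ n) := by positivity
    refine ⟨_, ball_mem_nhds p (by rw [hcn]; positivity :
      0 < ‖((r / 2 : ℝ) : ℂ) * w‖ / 2), _, fun x hx hgx =>
      norm_fderiv_im_div_im_le_of_rescaled_near_pow (Nat.pos_of_ne_zero hn) (p := p)
        (c := (r / 2 : ℝ) * w) (β := (g p).re) hc0 hα
        (fun z hz => (hball (hdist z hz)).1.2) hg hh hreal hpos (fun z hz => ?_) hx hgx⟩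
    obtain ⟨⟨h1, -⟩, h2⟩ := hball (hdist z hz)
    have hgre : (((g p).re : ℝ) : ℂ) = g p := by
      apply Complex.ext <;> simp [hgp]
    simp only [Pi.sub_apply] at h1
    rw [hgre, h1, add_sub_cancel_left, smul_eq_mul]
    rw [dist_eq_norm] at h2
    have hr0 : (r : ℂ) ≠ 0 := by exact_mod_cast hr.ne'
    have hφn0 : (‖φ p‖ : ℂ) ≠ 0 := by exact_mod_cast hφn.ne'
    have e : ((1 / (‖φ p‖ * (r / 2) ^ n) : ℝ) : ℂ) * (((r / 2 : ℝ) * w * z) ^ n *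
        φ (p + (r / 2 : ℝ) * w * z)) - z ^ n =
        z ^ n * (w ^ n * (φ (p + (r / 2 : ℝ) * w * z) - φ p)) / ‖φ p‖ := by
      have e2 : w ^ n * φ p = ‖φ p‖ := by rw [hw]; field_simp
      have e3 : ((r / 2 : ℝ) : ℂ) ^ n ≠ 0 := by
        apply pow_ne_zero; push_cast; simpa using hr0
      rw [mul_pow, mul_pow, mul_sub, e2]
      push_cast at e3 ⊢
      field_simp
    rw [e, norm_div, norm_mul, norm_mul, norm_pow, norm_pow, hw1, one_pow, one_mul,
      Complex.norm_real, norm_norm, div_le_iff₀ hφn]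
    rw [mem_ball_zero_iff] at hz
    calc _ ≤ (7 / 4) ^ n * δ := by gcongr
      _ = _ := by rw [hδ]; field_simp
  · have hgr : ContDiffAt ℝ 1 (fun z => (g z).im) p :=
      Complex.imCLM.contDiff.contDiffAt.comp p (hga.contDiffAt.restrict_scalars ℝ)
    have hhr : ContDiffAt ℝ 1 (fun z => (h z).im) p :=
      Complex.imCLM.contDiff.contDiffAt.comp p (hha.contDiffAt.restrict_scalars ℝ)
    have hf : ContDiffAt ℝ 1 (fun z => (h z).im / (g z).im) p := hhr.div hgr hgp
    obtain ⟨K, S, hS, hlip⟩ := hf.exists_lipschitzOnWith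
    have hfp : 0 < (h p).im / (g p).im := by
      have := hpos p hp hgp
      rw [← mul_div_mul_right _ _ hgp, ← sq]
      positivity
    have hev := hf.continuousAt.eventually (lt_mem_nhds (half_lt_self hfp))
    refine ⟨_, hev.and (eventually_mem_nhds_iff.2 hS), K / ((h p).im / (g p).im / 2),
      fun x hx _ => ?_⟩
    have h1 : ‖fderiv ℝ (fun z => (h z).im / (g z).im) x‖ ≤ K :=
      norm_fderiv_le_of_lipschitzOn ℝ hx.2 hlip
    refine h1.trans ?_
    rw [div_mul_eq_mul_div, le_div_iff₀ (half_pos hfp)]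
    exact mul_le_mul_of_nonneg_left hx.1.le K.2

lemma exists_forall_norm_fderiv_im_div_im_le {g h : ℂ → ℂ}
    (hg : DifferentiableOn ℂ g (ball 0 1)) (hh : DifferentiableOn ℂ h (ball 0 1))
    (hreal : ∀ z ∈ ball (0 : ℂ) 1, (g z).im = 0 → (h z).im = 0)
    (hpos : ∀ z ∈ ball (0 : ℂ) 1, (g z).im ≠ 0 → 0 < (h z).im * (g z).im) :
    ∃ C : ℝ, ∀ x ∈ ball (0 : ℂ) (1 / 4), (g x).im ≠ 0 →
      ‖fderiv ℝ (fun z => (h z).im / (g z).im) x‖ ≤ C * ((h x).im / (g x).im) := by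
  have hq : ∀ x ∈ ball (0 : ℂ) 1, (g x).im ≠ 0 → 0 ≤ (h x).im / (g x).im := by
    intro x hx hgx
    have := hpos x hx hgx
    rw [← mul_div_mul_right _ _ hgx, ← sq]
    positivity
  suffices ∃ C : ℝ, ∀ x ∈ closedBall (0 : ℂ) (1 / 4), x ∈ ball (0 : ℂ) 1 → (g x).im ≠ 0 →
      ‖fderiv ℝ (fun z => (h z).im / (g z).im) x‖ ≤ C * ((h x).im / (g x).im) by
    obtain ⟨C, hC⟩ := this
    exact ⟨C, fun x hx => hC x (ball_subset_closedBall hx) (ball_subset_ball (by norm_num) hx)⟩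
  refine (isCompact_closedBall (0 : ℂ) (1 / 4)).induction_on
    (p := fun S => ∃ C : ℝ, ∀ x ∈ S, x ∈ ball (0 : ℂ) 1 → (g x).im ≠ 0 →
      ‖fderiv ℝ (fun z => (h z).im / (g z).im) x‖ ≤ C * ((h x).im / (g x).im)) ?_ ?_ ?_ ?_
  · simp
  · rintro s t hst ⟨C, hC⟩
    exact ⟨C, fun x hx => hC x (hst hx)⟩
  · rintro s t ⟨C₁, h₁⟩ ⟨C₂, h₂⟩
    refine ⟨max C₁ C₂, fun x hx hx1 hgx => ?_⟩
    have := hq x hx1 hgx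
    rcases hx with hx | hx
    · exact (h₁ x hx hx1 hgx).trans (by gcongr; exact le_max_left _ _)
    · exact (h₂ x hx hx1 hgx).trans (by gcongr; exact le_max_right _ _)
  · intro p hp
    obtain ⟨N, hN, C, hC⟩ := exists_mem_nhds_norm_fderiv_im_div_im_le hg hh hreal hpos
      (closedBall_subset_ball (by norm_num) hp)
    exact ⟨N, mem_nhdsWithin_of_mem_nhds hN, C, fun x hx _ => hC x hx⟩

/-- If the imaginary part of a holomorphic function is small, then so is the function up to a real
constant, on smaller discs. -/
lemma norm_le_of_forall_abs_im_le {f : ℂ → ℂ} {M r R : ℝ} (hM : 0 < M) (hr : 0 ≤ r) (hrR : r < R)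
    (hf : DifferentiableOn ℂ f (ball 0 R)) (him : ∀ z ∈ ball (0 : ℂ) R, |(f z).im| ≤ M)
    (h0 : (f 0).re = 0) {z : ℂ} (hz : ‖z‖ ≤ r) :
    ‖f z‖ ≤ 4 * M * R / (R - r) := by
  have hR : 0 < R := hr.trans_lt hrR
  have hzR : ‖z‖ < R := hz.trans_lt hrR
  have key := Complex.borelCaratheodory (f := fun z => -Complex.I * f z) hM (hf.const_mul _)
    (fun w hw => by simpa using (abs_le.1 (him w hw)).2) hR (mem_ball_zero_iff.2 hzR)
  have hf0 : ‖f 0‖ ≤ M := by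
    have : f 0 = ((f 0).im : ℂ) * Complex.I := by apply Complex.ext <;> simp [h0]
    rw [this]
    simpa using him 0 (mem_ball_self hR)
  simp only [norm_mul, norm_neg, Complex.norm_I, one_mul] at key
  refine key.trans ?_
  rw [← add_div]
  have : 0 < R - ‖z‖ := by linarith
  gcongr ?_ / ?_
  · nlinarith [norm_nonneg z, norm_nonneg (f 0)]
  · linarith

/-- A real function harmonic on the unit disc is the imaginary part of a holomorphic function. -/
lemma HarmonicOnSet.exists_differentiableOn_im_eq {w : En 2 → ℝ}
    (hw : HarmonicOnSet w (ball 0 1)) :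
    ∃ g : ℂ → ℂ, DifferentiableOn ℂ g (ball 0 1) ∧
      ∀ z ∈ ball (0 : ℂ) 1, (g z).im = w (Complex.orthonormalBasisOneI.repr z) := by
  set e := Complex.orthonormalBasisOneI.repr with he
  have hmem : ∀ z ∈ ball (0 : ℂ) 1, e z ∈ ball (0 : En 2) 1 := by
    intro z hz
    simpa [mem_ball_zero_iff] using hz
  have hlap : ∀ z, Laplacian.laplacian (w ∘ e) z = laplacianAt w (e z) := by
    intro z
    rw [InnerProductSpace.laplacian_eq_iteratedFDeriv_orthonormalBasis _
      Complex.orthonormalBasisOneI]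
    have := e.toContinuousLinearEquiv.iteratedFDerivWithin_comp_right w uniqueDiffOn_univ
      (mem_univ (e.toContinuousLinearEquiv z)) 2
    rw [preimage_univ, iteratedFDerivWithin_univ, iteratedFDerivWithin_univ] at this
    simp only [laplacianAt]
    refine Finset.sum_congr rfl fun i _ => ?_
    have h2 := congrArg
      (fun T => T ![Complex.orthonormalBasisOneI i, Complex.orthonormalBasisOneI i]) this
    refine h2.trans ?_
    simp only [ContinuousMultilinearMap.compContinuousLinearMap_apply]
    refine congrArg (iteratedFDeriv ℝ 2 w (e z)) ?_
    funext j
    fin_cases j <;> exact Complex.orthonormalBasisOneI.repr_self i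
  have hharm : InnerProductSpace.HarmonicOnNhd (w ∘ e) (ball 0 1) := by
    intro z hz
    refine ⟨(hw.1.contDiffAt (isOpen_ball.mem_nhds (hmem z hz))).comp z
      e.toContinuousLinearEquiv.contDiff.contDiffAt, ?_⟩
    filter_upwards [isOpen_ball.mem_nhds hz] with y hy
    rw [hlap, hw.2 _ (hmem y hy)]
    rfl
  obtain ⟨F, hF, hFe⟩ := hharm.exists_analyticOnNhd_ball_re_eq
  refine ⟨fun z => Complex.I * F z, hF.differentiableOn.const_mul _, fun z hz => ?_⟩
  simpa using hFe hz

lemma norm_gradient_div_eq_norm_fderiv_im_div_im {a b : En 2 → ℝ} {g h : ℂ → ℂ}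
    (hg : ∀ z ∈ ball (0 : ℂ) 1, (g z).im = b (Complex.orthonormalBasisOneI.repr z))
    (hh : ∀ z ∈ ball (0 : ℂ) 1, (h z).im = a (Complex.orthonormalBasisOneI.repr z))
    {z : ℂ} (hz : z ∈ ball (0 : ℂ) 1) :
    ‖gradient (fun x => a x / b x) (Complex.orthonormalBasisOneI.repr z)‖ =
      ‖fderiv ℝ (fun z => (h z).im / (g z).im) z‖ := by
  set e := Complex.orthonormalBasisOneI.repr with he
  have h1 : (fun z => (h z).im / (g z).im) =ᶠ[𝓝 z] (fun x => a x / b x) ∘ e := by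
    filter_upwards [isOpen_ball.mem_nhds hz] with y hy
    simp [hg y hy, hh y hy]
  rw [h1.fderiv_eq, gradient, LinearIsometryEquiv.norm_map]
  have := e.norm_iteratedFDeriv_comp_right (fun x => a x / b x) z 1
  rw [norm_iteratedFDeriv_one, norm_iteratedFDeriv_one] at this
  exact this.symm

theorem stmt9 (u v : ℕ → En 2 → ℝ) (U : En 2 → ℝ) (k : ℕ) (hk : 0 < k)
    (hu : ∀ m, HarmonicOnSet (u m) (ball 0 1))
    (hv : ∀ m, HarmonicOnSet (v m) (ball 0 1))
    (hz : ∀ m, zeroSet (u m) (ball 0 1) = zeroSet (v m) (ball 0 1))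
    (hpos : ∀ m, ∀ x ∈ ball (0 : En 2) 1 \ zeroSet (u m) (ball 0 1), 0 < u m x * v m x)
    (hU : HarmonicOnSet U (ball 0 1))
    (hUne : ∃ x ∈ ball (0 : En 2) 1, U x ≠ 0)
    (hconvU : ∀ K : Set (En 2), K ⊆ ball (0 : En 2) 1 → IsCompact K →
      TendstoUniformlyOn (fun m x => u m x) U atTop K)
    (hconvV : ∀ K : Set (En 2), K ⊆ ball (0 : En 2) 1 → IsCompact K →
      TendstoUniformlyOn (fun m x => v m x)
        (fun x => (((x 0 : ℂ) + (x 1 : ℂ) * Complex.I) ^ k).im) atTop K) :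
    ∃ C : ℝ, ∀ m, ∀ x ∈ ball (0 : En 2) (1/4) \ zeroSet (v m) (ball 0 1),
      ‖gradient (fun z => u m z / v m z) x‖ ≤ C * (u m x / v m x) := by
  set e := Complex.orthonormalBasisOneI.repr with he
  have hmem : ∀ z ∈ ball (0 : ℂ) 1, e z ∈ ball (0 : En 2) 1 := by
    intro z hz
    simpa [mem_ball_zero_iff] using hz
  choose g hg hgv using fun m => (hv m).exists_differentiableOn_im_eq
  choose h hh hhu using fun m => (hu m).exists_differentiableOn_im_eq
  have hreal : ∀ m, ∀ z ∈ ball (0 : ℂ) 1, (g m z).im = 0 → (h m z).im = 0 := by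
    intro m z hz1 h0
    rw [hgv m z hz1] at h0
    rw [hhu m z hz1]
    have : e z ∈ zeroSet (u m) (ball 0 1) := by rw [hz m]; exact ⟨hmem z hz1, h0⟩
    exact this.2
  have hpos' : ∀ m, ∀ z ∈ ball (0 : ℂ) 1, (g m z).im ≠ 0 → 0 < (h m z).im * (g m z).im := by
    intro m z hz1 h0
    rw [hgv m z hz1] at h0 ⊢
    rw [hhu m z hz1]
    refine hpos m _ ⟨hmem z hz1, fun h => h0 ?_⟩
    rw [hz m] at h
    exact h.2
  -- it suffices to bound the logarithmic gradient of the quotient of the imaginary parts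
  have transfer : ∀ m C, (∀ z ∈ ball (0 : ℂ) (1 / 4), (g m z).im ≠ 0 →
      ‖fderiv ℝ (fun z => (h m z).im / (g m z).im) z‖ ≤ C * ((h m z).im / (g m z).im)) →
      ∀ C' ≥ C, ∀ x ∈ ball (0 : En 2) (1 / 4) \ zeroSet (v m) (ball 0 1),
      ‖gradient (fun z => u m z / v m z) x‖ ≤ C' * (u m x / v m x) := by
    intro m C hC C' hC' x hx
    obtain ⟨z, rfl⟩ := e.surjective x
    have hz4 : z ∈ ball (0 : ℂ) (1 / 4) := by simpa [mem_ball_zero_iff] using hx.1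
    have hz1 : z ∈ ball (0 : ℂ) 1 := ball_subset_ball (by norm_num) hz4
    have h0 : (g m z).im ≠ 0 := by
      rw [hgv m z hz1]
      exact fun h => hx.2 ⟨hmem z hz1, h⟩
    rw [norm_gradient_div_eq_norm_fderiv_im_div_im (hgv m) (hhu m) hz1, ← hgv m z hz1,
      ← hhu m z hz1]
    have hq : 0 ≤ (h m z).im / (g m z).im := by
      have := hpos' m z hz1 h0
      rw [← mul_div_mul_right _ _ h0, ← sq]
      positivity
    exact (hC z hz4 h0).trans (mul_le_mul_of_nonneg_right hC' hq)
  choose D hD using fun m =>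
    exists_forall_norm_fderiv_im_div_im_le (hg m) (hh m) (hreal m) (hpos' m)
  have hk' : (0 : ℝ) < k := by exact_mod_cast hk
  set ε : ℝ := Real.exp (-(k / 2 : ℝ)) / (100 * k) / 2 ^ k / 60 with hε
  have hε0 : 0 < ε := by positivity
  have hclose := Metric.tendstoUniformlyOn_iff.1
    (hconvV (closedBall 0 (15 / 16)) (closedBall_subset_ball (by norm_num))
      (isCompact_closedBall _ _)) ε hε0
  have hunif : ∀ᶠ m in atTop, ∀ z ∈ ball (0 : ℂ) (1 / 4), (g m z).im ≠ 0 →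
      ‖fderiv ℝ (fun z => (h m z).im / (g m z).im) z‖ ≤
        32768 * ((7 / 4) ^ k + 1) / ‖(1 / 2 : ℂ)‖ * ((h m z).im / (g m z).im) := by
    filter_upwards [hclose] with m hm z hz4 h0
    have hsub : ball (0 : ℂ) (15 / 16) ⊆ ball 0 1 := ball_subset_ball (by norm_num)
    have hmaps : ∀ z ∈ ball (0 : ℂ) (7 / 4), ‖(1 / 2 : ℂ) * z‖ < 7 / 8 := by
      intro z hz
      rw [mem_ball_zero_iff] at hz
      rw [norm_mul]
      norm_num
      linarith
    refine norm_fderiv_im_div_im_le_of_rescaled_near_pow hk (p := 0) (c := 1 / 2) (α := 2 ^ k)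
      (β := (g m 0).re) (by norm_num) (by positivity) (fun z hz => ?_) (hg m) (hh m) (hreal m)
      (hpos' m) (fun z hz => ?_) ?_ h0
    · rw [zero_add, mem_ball_zero_iff]
      linarith [hmaps z hz]
    · rw [zero_add]
      have hb := norm_le_of_forall_abs_im_le (f := fun z => g m z - (g m 0).re - z ^ k)
        (r := 7 / 8) (R := 15 / 16) hε0 (by norm_num) (by norm_num)
        ((((hg m).mono hsub).sub_const _).sub (by fun_prop)) (fun z hz => ?_)
        (by simp [hk.ne']) (hmaps z hz).le
      · have e1 : (((2 ^ k : ℝ) : ℂ) * (g m (1 / 2 * z) - (g m 0).re) - z ^ k) =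
            2 ^ k * (g m (1 / 2 * z) - (g m 0).re - (1 / 2 * z) ^ k) := by
          have : (2 : ℂ) ^ k * (1 / 2 * z) ^ k = z ^ k := by
            rw [← mul_pow]; congr 1; ring
          push_cast
          rw [mul_sub _ _ ((1 / 2 * z) ^ k), this]
        rw [e1, norm_mul, norm_pow, Complex.norm_ofNat]
        calc _ ≤ 2 ^ k * (4 * ε * (15 / 16) / (15 / 16 - 7 / 8)) := by gcongr
          _ = _ := by rw [hε]; field_simp; norm_num
      · have h1 := hm (e z) (by
          have := (mem_ball_zero_iff.1 hz).le
          simpa [mem_closedBall_zero_iff] using this)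
        rw [← hgv m z (hsub hz), dist_comm, Real.dist_eq] at h1
        refine le_of_eq_of_le ?_ h1.le
        simp [he, Complex.orthonormalBasisOneI_repr_apply, Complex.re_add_im]
    · convert hz4 using 2
      norm_num
  obtain ⟨M, hM⟩ := eventually_atTop.1 hunif
  set C₀ : ℝ := 32768 * ((7 / 4) ^ k + 1) / ‖(1 / 2 : ℂ)‖
  have hC₀ : 0 ≤ C₀ := by positivity
  refine ⟨C₀ + ∑ i ∈ Finset.range M, |D i|, fun m => ?_⟩
  by_cases hmM : M ≤ m
  · exact transfer m C₀ (hM m hmM) _ (le_add_of_nonneg_right (by positivity))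
  · refine transfer m (D m) (hD m) _ ((le_abs_self _).trans ?_)
    have := Finset.single_le_sum (f := fun i => |D i|) (fun i _ => abs_nonneg _)
      (Finset.mem_range.2 (not_le.1 hmM))
    linarith
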